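/- arXiv:1508.05442 — 3 statements merged into one kernel-verified Lean document; each statement's English description precedes it below -/
import Mathlib

section
/- Let k ∈ ℕ and set l := 4k − 1. Let P be a polynomial with real coefficients of degree < l and let μ be a finite positive Borel measure on [−1, 1]. Let A, B be bounded self-adjoint operators on H with the spectrum of A contained in (−1, 1) and B positive semidefinite, and set X := A + iB. Then for every λ ∈ [−1, 1] the operators I − λX and I − λ(A + tB) (for real t near 0) are invertible, the Bochner integrals defining f(Y) := P(Y) + ∫_{[−1,1]} Y^{l} (I − λY)^{-1} dμ(λ) exist for Y = X and Y = A + tB, and Im f(X) ≤ Σ_{m=1}^{2k−1} ((−1)^{m−1} / (2m−1)!) · D^{2m−1}f(A;B), where D^{m}f(A;B) denotes the m-th derivative at t = 0 of the map t ↦ f(A + tB). -/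
open ContinuousLinearMap MeasureTheory

variable {H : Type*} [NormedAddCommGroup H] [InnerProductSpace ℂ H] [CompleteSpace H]

/-- The imaginary part `(Y - Y*)/(2i)` of a bounded operator. -/
noncomputable def opIm (Y : H →L[ℂ] H) : H →L[ℂ] H := (2 * Complex.I)⁻¹ • (Y - star Y)

/-- The operator function `Y ↦ P(Y) + ∫_{[−1,1]} Y^l (I − λY)⁻¹ dμ(λ)`, the integral
representation of an operator `l`-tone function on `(−1,1)`. -/
noncomputable def fcal (P : Polynomial ℝ) (μ : Measure ℝ) (l : ℕ) (Y : H →L[ℂ] H) :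
    H →L[ℂ] H :=
  Polynomial.aeval Y (P.map Complex.ofRealHom) +
    ∫ s, Y ^ l * Ring.inverse (1 - (s : ℂ) • Y) ∂μ

set_option linter.deprecated false
set_option linter.unusedSectionVars false

section aux
variable {𝓔 : Type*} [Ring 𝓔] [Algebra ℂ 𝓔]

lemma aux_pow (a b : 𝓔) (n : ℕ) : ∃ d : ℕ → 𝓔, (∀ j, n < j → d j = 0) ∧
    ∀ z : ℂ, (a + z • b) ^ n = ∑ j ∈ Finset.range (n + 1), z ^ j • d j := by
  induction n with
  | zero => exact ⟨fun j => if j = 0 then 1 else 0, fun j hj => by simp; omega, fun z => by simp⟩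
  | succ n ih =>
    obtain ⟨d, hd0, hd⟩ := ih
    refine ⟨fun j => a * d j + (match j with | 0 => 0 | i + 1 => b * d i), ?_, ?_⟩
    · intro j hj
      obtain ⟨i, rfl⟩ : ∃ i, j = i + 1 := ⟨j - 1, by omega⟩
      simp [hd0 (i + 1) (by omega), hd0 i (by omega)]
    · intro z
      rw [pow_succ', hd]
      simp only [smul_add, Finset.sum_add_distrib, add_mul]
      congr 1
      · rw [Finset.sum_range_succ _ (n + 1), hd0 (n + 1) (by omega)]
        simp [Finset.mul_sum]
      · rw [Finset.sum_range_succ' _ (n + 1)]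
        simp only [smul_zero, add_zero, Finset.mul_sum]
        refine Finset.sum_congr rfl fun i _ => ?_
        rw [smul_mul_smul_comm, pow_succ']

lemma aux_pow' (a b : 𝓔) (n : ℕ) : ∃ d : ℕ → 𝓔, ∀ N, n < N →
    ∀ z : ℂ, (a + z • b) ^ n = ∑ j ∈ Finset.range N, z ^ j • d j := by
  obtain ⟨d, hd0, hd⟩ := aux_pow a b n
  refine ⟨d, fun N hN z => ?_⟩
  rw [hd]
  refine Finset.sum_subset (by simpa using hN) ?_
  intro j _ hj
  rw [hd0 j (by simpa using hj), smul_zero]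

lemma aux_poly (a b : 𝓔) (p : Polynomial ℂ) (l : ℕ) (hp : p.degree < (l : WithBot ℕ)) :
    ∃ e : ℕ → 𝓔, ∀ z : ℂ, Polynomial.aeval (a + z • b) p = ∑ j ∈ Finset.range l, z ^ j • e j := by
  choose d hd using fun n => aux_pow' a b n
  refine ⟨fun j => ∑ i ∈ Finset.range l, p.coeff i • d i j, fun z => ?_⟩
  rcases eq_or_ne p 0 with rfl | h0
  · simp
  rw [Polynomial.aeval_eq_sum_range' ((Polynomial.natDegree_lt_iff_degree_lt h0).2 hp)]
  simp only [Finset.smul_sum]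
  rw [Finset.sum_comm]
  refine Finset.sum_congr rfl fun i hi => ?_
  rw [hd i l (Finset.mem_range.1 hi) z, Finset.smul_sum]
  exact Finset.sum_congr rfl fun j _ => smul_comm _ _ _

lemma aux_res (a b L R : 𝓔) (hL : ∀ x, L * x = x * L) (hR : R * (1 - L * a) = 1) (n : ℕ) :
    ∃ c : ℕ → 𝓔, ∀ (z : ℂ) (W : 𝓔), (1 - L * (a + z • b)) * W = 1 → W * (1 - L * (a + z • b)) = 1 →
      (a + z • b) ^ n * W = ∑ j ∈ Finset.range n, z ^ j • c j + z ^ n • ((R * b) ^ n * W) := by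
  induction n with
  | zero => exact ⟨0, fun z W _ _ => by simp⟩
  | succ n ih =>
    obtain ⟨c, hc⟩ := ih
    obtain ⟨d, hd⟩ := aux_pow' a b n
    refine ⟨fun j => R * a * d j + (match j with | 0 => 0 | i + 1 => R * b * c i), ?_⟩
    intro z W h1 h2
    have hz := hc z W h1 h2
    set Y := a + z • b with hY
    have hcomm : Y * W = W * Y := by
      have h3 : Y * (1 - L * Y) = (1 - L * Y) * Y := by
        simp only [mul_sub, sub_mul, mul_one, one_mul]
        rw [← mul_assoc Y L, ← hL Y]
      calc Y * W = W * (1 - L * Y) * (Y * W) := by rw [h2, one_mul]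
        _ = W * ((1 - L * Y) * Y) * W := by simp only [mul_assoc]
        _ = W * Y * ((1 - L * Y) * W) := by rw [← h3]; simp only [mul_assoc]
        _ = W * Y := by rw [h1, mul_one]
    have key : Y * W = R * a + z • (R * b * W) := by
      have e1 : Y * W = R * (1 - L * a) * (Y * W) := by rw [hR, one_mul]
      have e2 : R * a = R * a * ((1 - L * Y) * W) := by rw [h1, mul_one]
      have e3 : z • (R * b * W) = R * (Y - a) * W := by simp [hY]
      rw [e3, e1, e2]
      have e4 : a * (L * Y) = L * a * Y := by rw [← mul_assoc, hL]
      calc R * (1 - L * a) * (Y * W) = R * (Y - L * a * Y) * W := by noncomm_ring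
        _ = R * (a - a * (L * Y) + (Y - a)) * W := by rw [e4]; congr 2; abel
        _ = _ := by noncomm_ring
    have hcn : ∀ m, W * Y ^ m = Y ^ m * W := fun m => (Commute.pow_right (hcomm.symm : Commute W Y) m)
    rw [pow_succ', mul_assoc, ← hcn, ← mul_assoc, key, add_mul, smul_mul_assoc, mul_assoc (R * b) W, hcn,
      hz, hd (n + 1) (by omega) z]
    simp only [smul_add, Finset.sum_add_distrib, mul_add]
    rw [← add_assoc]
    congr 1
    · congr 1
      · simp [Finset.mul_sum]
      · rw [Finset.sum_range_succ']
        simp only [smul_zero, add_zero, Finset.mul_sum, Finset.smul_sum]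
        refine Finset.sum_congr rfl fun i _ => ?_
        rw [mul_smul_comm, smul_smul, pow_succ']
    · rw [mul_smul_comm, smul_smul, ← pow_succ', ← mul_assoc, ← pow_succ']
end aux

section deriv
variable {F : Type*} [NormedAddCommGroup F] [NormedSpace ℝ F] [CompleteSpace F]

lemma aux_deriv0 (m : ℕ) : ∀ (l : ℕ) (ρ : ℝ → F), AnalyticAt ℝ ρ 0 → m < l →
    iteratedDeriv m (fun t : ℝ => t ^ l • ρ t) 0 = 0 := by
  induction m with
  | zero => intro l ρ _ hl; simp [show l ≠ 0 by omega]
  | succ m ih =>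
    intro l ρ hρ hl
    obtain ⟨l, rfl⟩ : ∃ i, l = i + 1 := ⟨l - 1, by omega⟩
    rw [iteratedDeriv_succ']
    have : deriv (fun t : ℝ => t ^ (l + 1) • ρ t) =ᶠ[nhds 0]
        fun t => t ^ l • (t • deriv ρ t + ((l + 1 : ℕ) : ℝ) • ρ t) := by
      filter_upwards [hρ.eventually_analyticAt] with t ht
      have h := ((hasDerivAt_pow (l + 1) t).smul ht.differentiableAt.hasDerivAt).deriv
      refine h.trans ?_
      simp only [smul_add, smul_smul, Nat.add_sub_cancel, pow_succ]
      congr 2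
      ring
    rw [this.iteratedDeriv_eq]
    refine ih l _ ?_ (by omega)
    have := hρ.deriv
    fun_prop

lemma aux_deriv (l : ℕ) (C : ℕ → F) (ρ : ℝ → F) (f : ℝ → F) (hρ : AnalyticAt ℝ ρ 0)
    (hf : f =ᶠ[nhds 0] fun t => ∑ j ∈ Finset.range l, t ^ j • C j + t ^ l • ρ t)
    (m : ℕ) (hm : m < l) : iteratedDeriv m f 0 = (m.factorial : ℝ) • C m := by
  rw [hf.iteratedDeriv_eq]
  have h1 : ContDiffAt ℝ m (fun t : ℝ => ∑ j ∈ Finset.range l, t ^ j • C j) 0 := by fun_prop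
  have h2 : ContDiffAt ℝ m (fun t : ℝ => t ^ l • ρ t) 0 := by
    have := hρ.contDiffAt (n := m)
    fun_prop
  have := iteratedDeriv_add h1 h2
  rw [show (fun t : ℝ => ∑ j ∈ Finset.range l, t ^ j • C j + t ^ l • ρ t) =
    (fun t : ℝ => ∑ j ∈ Finset.range l, t ^ j • C j) + (fun t : ℝ => t ^ l • ρ t) from rfl, this,
    aux_deriv0 m l ρ hρ hm, add_zero]
  simp (disch := fun_prop) only [iteratedDeriv_fun_sum, iteratedDeriv_smul_const,
      iteratedDeriv_fun_pow_zero]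
  rw [Finset.sum_eq_single m]
  · simp
  · intro j _ hj; simp [Ne.symm hj]
  · intro h; simp at h; omega
end deriv

section star
variable {𝓔 : Type*} [Ring 𝓔] [StarRing 𝓔] [Algebra ℂ 𝓔] [StarModule ℂ 𝓔]

/-- `M - i s B` with inverse `W`. -/
lemma aux_star (M R B W : 𝓔) (s : ℝ) (hM : star M = M) (hB : star B = B)
    (hMR : M * R = 1) (hRM : R * M = 1)
    (h1 : (M - (Complex.I * s) • B) * W = 1) (h2 : W * (M - (Complex.I * s) • B) = 1) (j : ℕ) :
    (R * B) ^ (2 * j + 1) * W + star ((R * B) ^ (2 * j + 1) * W) =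
      (2 : ℂ) • ((R * B) ^ j * W * B * star ((R * B) ^ j * W)) := by
  have hR : star R = R := by
    have : star R * M = 1 := by rw [← hM, ← star_mul, hMR, star_one]
    calc star R = star R * (M * R) := by rw [hMR, mul_one]
      _ = R := by rw [← mul_assoc, this, one_mul]
  set D := M - (Complex.I * s) • B with hD
  have hDs : star D = M + (Complex.I * s) • B := by
    simp [hD, hM, hB]
  have h1' : star W * star D = 1 := by rw [← star_mul, h1, star_one]
  have h2' : star D * star W = 1 := by rw [← star_mul, h2, star_one]
  have hTD : B * R * D = D * (R * B) := by
    simp only [hD, mul_sub, sub_mul, mul_assoc, hRM, smul_mul_assoc, mul_smul_comm, mul_one]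
    simp only [← mul_assoc, hMR, one_mul]
  have hTW : (R * B) * W = W * (B * R) := by
    calc (R * B) * W = W * D * ((R * B) * W) := by rw [h2, one_mul]
      _ = W * (D * (R * B)) * W := by simp only [mul_assoc]
      _ = W * (B * R) * (D * W) := by rw [← hTD]; simp only [mul_assoc]
      _ = _ := by rw [h1, mul_one]
  have hpow : ∀ n, (R * B) ^ n * W = W * (B * R) ^ n := by
    intro n
    induction n with
    | zero => simp
    | succ n ih => rw [pow_succ, mul_assoc, hTW, ← mul_assoc, ih, mul_assoc, ← pow_succ]
  have hst : star (R * B) = B * R := by rw [star_mul, hR, hB]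
  have hst' : star (B * R) = R * B := by rw [star_mul, hR, hB]
  have hbase : W * (B * R) + (R * B) * star W = (2 : ℂ) • (W * B * star W) := by
    have e : (B * R) * star D + D * (R * B) = (2 : ℂ) • B := by
      rw [← hTD, ← mul_add, hDs, hD, add_add_sub_cancel, ← two_smul ℂ M, mul_smul_comm,
        mul_assoc, hRM, mul_one]
    calc W * (B * R) + (R * B) * star W
        = W * (B * R) * (star D * star W) + (W * D) * (R * B) * star W := by
          rw [h2', h2, mul_one, one_mul]
      _ = W * ((B * R) * star D + D * (R * B)) * star W := by noncomm_ring
      _ = _ := by rw [e]; simp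
  have e1 : (R * B) ^ (2 * j + 1) * W = (R * B) ^ j * (W * (B * R)) * (B * R) ^ j := by
    rw [show 2 * j + 1 = j + (j + 1) by ring, pow_add, mul_assoc, hpow, pow_succ']
    simp only [mul_assoc]
  rw [e1]
  have e2 : star ((R * B) ^ j * (W * (B * R)) * (B * R) ^ j) =
      (R * B) ^ j * ((R * B) * star W) * (B * R) ^ j := by
    simp only [star_mul, star_pow, hR, hB, mul_assoc]
  rw [e2, ← add_mul, ← mul_add, hbase, star_mul, star_pow, hst]
  simp [mul_assoc]
end star

section op

lemma aux_unitA (A : H →L[ℂ] H)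
    (hspA : spectrum ℂ A ⊆ (fun x : ℝ => (x : ℂ)) '' Set.Ioo (-1 : ℝ) 1) (s : ℝ)
    (hs : s ∈ Set.Icc (-1 : ℝ) 1) : IsUnit (1 - (s : ℂ) • A) := by
  rcases eq_or_ne s 0 with rfl | h0
  · simp
  have h0' : (s : ℂ) ≠ 0 := by exact_mod_cast h0
  have : ((s : ℂ)⁻¹) ∉ spectrum ℂ A := by
    intro h
    obtain ⟨x, hx, hxe⟩ := hspA h
    have hx' : x = s⁻¹ := by
      have : (x : ℂ) = ((s⁻¹ : ℝ) : ℂ) := by simpa using hxe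
      exact_mod_cast this
    have h1 : x * s = 1 := by rw [hx', inv_mul_cancel₀ h0]
    have h2 : |x| * |s| = 1 := by rw [← abs_mul, h1, abs_one]
    have h3 : |x| < 1 := abs_lt.2 hx
    have h4 : |s| ≤ 1 := abs_le.2 hs
    nlinarith [abs_nonneg x, abs_nonneg s]
  rw [spectrum.notMem_iff] at this
  have h5 : 1 - (s : ℂ) • A = (Units.mk0 (s : ℂ) h0') • (algebraMap ℂ (H →L[ℂ] H) (s : ℂ)⁻¹ - A) := by
    rw [Units.smul_def, smul_sub, Algebra.algebraMap_eq_smul_one, smul_smul]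
    simp [h0']
  rw [h5]
  exact this.smul _

lemma aux_coercive [Nontrivial H] (A : H →L[ℂ] H) (hA : IsSelfAdjoint A)
    (hspA : spectrum ℂ A ⊆ (fun x : ℝ => (x : ℂ)) '' Set.Ioo (-1 : ℝ) 1) (s : ℝ)
    (hs : s ∈ Set.Icc (-1 : ℝ) 1) :
    ∃ c > (0 : ℝ), ∀ x, c * ‖x‖ ^ 2 ≤ (inner ℂ ((1 - (s : ℂ) • A) x) x).re := by
  have hsa : IsSelfAdjoint (1 - (s : ℂ) • A) := by
    refine (IsSelfAdjoint.one _).sub (IsSelfAdjoint.smul ?_ hA)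
    simp [isSelfAdjoint_iff]
  obtain ⟨c, hc, hle⟩ := (CFC.exists_pos_algebraMap_le_iff hsa).2 (by
    intro x hx
    by_contra hneg
    push Not at hneg
    apply hx
    rw [spectrum.mem_resolventSet_iff]
    have h1 : (0 : ℝ) < 1 - x := by linarith
    have hu := aux_unitA A hspA (s / (1 - x)) (by
      have h4 : |s| ≤ 1 := abs_le.2 hs
      rw [Set.mem_Icc, ← abs_le, abs_div, abs_of_pos h1, div_le_one h1]
      linarith)
    have hne : ((x : ℂ) - 1) ≠ 0 := by
      intro h
      have : x - 1 = 0 := by exact_mod_cast h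
      linarith
    have hne' : (1 - (x : ℂ)) ≠ 0 := by
      intro h; apply hne; linear_combination -h
    have : algebraMap ℝ (H →L[ℂ] H) x - (1 - (s : ℂ) • A) =
        (Units.mk0 _ hne) • (1 - ((s / (1 - x) : ℝ) : ℂ) • A) := by
      rw [Units.smul_def, Units.val_mk0, smul_sub, smul_smul, Algebra.algebraMap_eq_smul_one]
      have e : ((x : ℂ) - 1) * ((s / (1 - x) : ℝ) : ℂ) = - s := by
        push_cast
        field_simp
        ring
      rw [e, sub_smul, one_smul, neg_smul, ← Complex.coe_smul]
      abel
    rw [this]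
    exact hu.smul _)
  refine ⟨c, hc, fun x => ?_⟩
  rw [ContinuousLinearMap.le_def] at hle
  have := hle.re_inner_nonneg_left x
  rw [Algebra.algebraMap_eq_smul_one] at this
  simp only [ContinuousLinearMap.sub_apply _, inner_sub_left] at this ⊢
  simp only [map_sub] at this
  have e : RCLike.re (inner ℂ ((c • (1 : H →L[ℂ] H)) x) x) = c * ‖x‖ ^ 2 := by
    rw [ContinuousLinearMap.smul_apply, ContinuousLinearMap.one_apply, ← Complex.coe_smul, inner_smul_left,
      inner_self_eq_norm_sq_to_K]
    simp [← Complex.ofReal_pow]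
  rw [e] at this
  simp only [RCLike.re_to_complex, Complex.sub_re] at this ⊢
  linarith

lemma aux_unitX [Nontrivial H] (A B : H →L[ℂ] H) (hA : IsSelfAdjoint A) (hB : IsSelfAdjoint B)
    (hspA : spectrum ℂ A ⊆ (fun x : ℝ => (x : ℂ)) '' Set.Ioo (-1 : ℝ) 1) (s : ℝ)
    (hs : s ∈ Set.Icc (-1 : ℝ) 1) : IsUnit (1 - (s : ℂ) • (A + Complex.I • B)) := by
  obtain ⟨c, hc, h⟩ := aux_coercive A hA hspA s hs
  refine ContinuousLinearMap.isUnit_of_forall_le_norm_inner_map _ (c := ⟨c, hc.le⟩) hc fun x => ?_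
  refine le_trans ?_ (Complex.re_le_norm _)
  have him : (inner ℂ (B x) x).im = 0 := by
    have := hB.isSymmetric.im_inner_apply_self x
    simpa using this
  have e : (1 - (s : ℂ) • (A + Complex.I • B)) x = (1 - (s : ℂ) • A) x - ((s : ℂ) * Complex.I) • B x := by
    simp [smul_smul, smul_add, sub_sub]
  rw [e, inner_sub_left, inner_smul_left, Complex.sub_re]
  have : ((starRingEnd ℂ) ((s : ℂ) * Complex.I) * inner ℂ (B x) x).re = 0 := by
    simp [him]
  rw [this, sub_zero, mul_comm]
  exact h x

end op

lemma aux_star_inv {𝓔 : Type*} [Ring 𝓔] [StarRing 𝓔] (c u : 𝓔) (hc : star c = c)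
    (hu : star u = u) (h : Commute c u) (l : ℕ) :
    star (c ^ l * Ring.inverse u) = c ^ l * Ring.inverse u := by
  rw [star_mul, star_pow, hc, ← Ring.inverse_star, hu]
  have h2 : Commute c (Ring.inverse u) := by
    by_cases hu : IsUnit u
    · obtain ⟨v, rfl⟩ := hu
      rw [Ring.inverse_unit]
      exact Commute.units_inv_right h
    · rw [Ring.inverse_non_unit _ hu]
      exact Commute.zero_right c
  exact (h2.pow_left l).symm

section main

/-- Continuous functions on `[-1,1]` with operator values. -/
abbrev CK (H : Type*) [NormedAddCommGroup H] [InnerProductSpace ℂ H] :=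
  C(Set.Icc (-1 : ℝ) 1, H →L[ℂ] H)

/-- The function `s ↦ s • 1`. -/
noncomputable def auxLam (H : Type*) [NormedAddCommGroup H] [InnerProductSpace ℂ H] : CK H := ⟨fun s => ((s : ℝ) : ℂ) • (1 : H →L[ℂ] H), by fun_prop⟩

/-- constants -/
noncomputable def auxC (Y : H →L[ℂ] H) : CK H := ContinuousMap.const _ Y

lemma auxC_line (A B : H →L[ℂ] H) (z : ℂ) : auxC (A + z • B) = auxC A + z • auxC B := by
  ext s : 1; rfl

lemma auxLam_comm (x : CK H) : auxLam H * x = x * auxLam H := by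
  ext s : 1; simp [auxLam]

lemma aux_apply (Y : H →L[ℂ] H) (s : Set.Icc (-1 : ℝ) 1) :
    (1 - auxLam H * auxC Y : CK H) s = 1 - ((s : ℝ) : ℂ) • Y := by
  simp [auxLam, auxC]

lemma aux_isUnit (Y : H →L[ℂ] H) : IsUnit (1 - auxLam H * auxC Y) ↔
    ∀ s ∈ Set.Icc (-1 : ℝ) 1, IsUnit (1 - (s : ℂ) • Y) := by
  rw [ContinuousMap.isUnit_iff_forall_isUnit]
  simp only [aux_apply]
  exact ⟨fun h s hs => h ⟨s, hs⟩, fun h s => h s s.2⟩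

lemma aux_inv_apply (φ : CK H) (h : IsUnit φ) (s : Set.Icc (-1 : ℝ) 1) :
    (Ring.inverse φ) s = Ring.inverse (φ s) := by
  have h' : IsUnit (φ s) := (ContinuousMap.isUnit_iff_forall_isUnit φ).1 h s
  have h1 : (Ring.inverse φ) s * φ s = 1 := by
    have := congrArg (fun ψ : CK H => ψ s) (Ring.inverse_mul_cancel φ h)
    simpa using this
  calc (Ring.inverse φ) s = (Ring.inverse φ) s * (φ s * Ring.inverse (φ s)) := by
        rw [Ring.mul_inverse_cancel _ h', mul_one]
    _ = _ := by rw [← mul_assoc, h1, one_mul]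

lemma auxC_int (ν : Measure (Set.Icc (-1 : ℝ) 1)) [IsFiniteMeasure ν] (φ : CK H) :
    Integrable (fun s => φ s) ν :=
  φ.continuous.integrable_of_hasCompactSupport (HasCompactSupport.of_compactSpace _)

/-- Integration functional. -/
noncomputable def auxL (ν : Measure (Set.Icc (-1 : ℝ) 1)) [IsFiniteMeasure ν] :
    CK H →L[ℂ] (H →L[ℂ] H) :=
  LinearMap.mkContinuous
    { toFun := fun φ => ∫ s, φ s ∂ν
      map_add' := fun φ ψ => integral_add (auxC_int ν φ) (auxC_int ν ψ)
      map_smul' := fun c φ => integral_smul c _ } (ν.real Set.univ) (by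
    intro φ
    refine (norm_integral_le_of_norm_le_const (C := ‖φ‖) (.of_forall fun s => φ.norm_coe_le_norm s)).trans
      (by rw [mul_comm]))

lemma auxL_apply (ν : Measure (Set.Icc (-1 : ℝ) 1)) [IsFiniteMeasure ν] (φ : CK H) :
    auxL ν φ = ∫ s, φ s ∂ν := rfl

lemma auxL_star (ν : Measure (Set.Icc (-1 : ℝ) 1)) [IsFiniteMeasure ν] (φ : CK H) :
    auxL ν (star φ) = star (auxL ν φ) := by
  rw [auxL_apply, auxL_apply]
  exact ((starL' ℝ : (H →L[ℂ] H) ≃L[ℝ] (H →L[ℂ] H)).integral_comp_comm (fun s => φ s))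

lemma auxL_pos (ν : Measure (Set.Icc (-1 : ℝ) 1)) [IsFiniteMeasure ν] (φ : CK H)
    (h : ∀ s, (φ s).IsPositive) : (auxL ν φ).IsPositive := by
  rw [← ContinuousLinearMap.nonneg_iff_isPositive, auxL_apply]
  exact integral_nonneg fun s => (ContinuousLinearMap.nonneg_iff_isPositive _).2 (h s)

lemma aux_integral (μ : Measure ℝ) [IsFiniteMeasure μ] (hμ : μ (Set.Icc (-1 : ℝ) 1)ᶜ = 0)
    (Y : H →L[ℂ] H) (l : ℕ) (h : IsUnit (1 - auxLam H * auxC Y)) :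
    Integrable (fun s : ℝ => Y ^ l * Ring.inverse (1 - (s : ℂ) • Y)) μ ∧
    ∫ s, Y ^ l * Ring.inverse (1 - (s : ℂ) • Y) ∂μ =
      auxL (μ.comap Subtype.val) ((auxC Y) ^ l * Ring.inverse (1 - auxLam H * auxC Y)) := by
  have hres : μ.restrict (Set.Icc (-1 : ℝ) 1) = μ := Measure.restrict_eq_self_of_ae_mem hμ
  have hfun : ((fun s : ℝ => Y ^ l * Ring.inverse (1 - (s : ℂ) • Y)) ∘
      (Subtype.val : Set.Icc (-1 : ℝ) 1 → ℝ)) =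
      fun s => ((auxC Y) ^ l * Ring.inverse (1 - auxLam H * auxC Y)) s := by
    ext1 s
    rw [ContinuousMap.mul_apply, aux_inv_apply _ h, aux_apply]
    rfl
  constructor
  · rw [← hres]
    change IntegrableOn _ _ _
    rw [integrableOn_iff_comap_subtypeVal measurableSet_Icc, hfun]
    exact auxC_int _ _
  · rw [auxL_apply, ← hfun]
    conv_lhs => rw [← hres]
    exact (integral_subtype_comap measurableSet_Icc _).symm

lemma opIm_add (Y Z : H →L[ℂ] H) : opIm (Y + Z) = opIm Y + opIm Z := by
  simp only [opIm, star_add, ← smul_add]; congr 1; abel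

lemma opIm_sum (C : ℕ → H →L[ℂ] H) (n : ℕ) (hC : ∀ j < 2 * n + 1, star (C j) = C j) :
    opIm (∑ j ∈ Finset.range (2 * n + 1), Complex.I ^ j • C j) =
      ∑ m ∈ Finset.Icc 1 n, ((-1 : ℝ) ^ (m - 1)) • C (2 * m - 1) := by
  induction n with
  | zero => simp [opIm, hC 0 (by omega)]
  | succ n ih =>
    rw [show 2 * (n + 1) + 1 = 2 * n + 1 + 1 + 1 by ring, Finset.sum_range_succ,
      Finset.sum_range_succ, opIm_add, opIm_add, ih fun j hj => hC j (by omega),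
      Finset.sum_Icc_succ_top (by omega), add_assoc]
    congr 1
    have e1 : Complex.I ^ (2 * n + 1) = (-1) ^ n * Complex.I := by
      rw [pow_succ, pow_mul, Complex.I_sq]
    have e2 : Complex.I ^ (2 * n + 1 + 1) = (-1) ^ (n + 1) := by
      rw [show 2 * n + 1 + 1 = 2 * (n + 1) by ring, pow_mul, Complex.I_sq]
    have s1 := hC (2 * n + 1) (by omega)
    have s2 := hC (2 * n + 1 + 1) (by omega)
    rw [e1, e2, show 2 * (n + 1) - 1 = 2 * n + 1 by omega, Nat.add_sub_cancel]
    have t2 : opIm (((-1 : ℂ) ^ (n + 1)) • C (2 * n + 1 + 1)) = 0 := by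
      simp [opIm, star_smul, s2]
    have t1 : opIm (((-1 : ℂ) ^ n * Complex.I) • C (2 * n + 1)) = (-1 : ℂ) ^ n • C (2 * n + 1) := by
      simp only [opIm, star_smul, s1, ← sub_smul, smul_smul]
      congr 1
      simp
      field_simp
      linear_combination (-2) * Complex.I_sq
    rw [t1, t2, add_zero, ← Complex.coe_smul]
    push_cast
    rfl

lemma opIm_last (Z : H →L[ℂ] H) (k : ℕ) (hk : 1 ≤ k) :
    opIm (Complex.I ^ (4 * k - 1) • Z) = -((1 / 2 : ℂ) • (Z + star Z)) := by
  have e : Complex.I ^ (4 * k - 1) = -Complex.I := by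
    obtain ⟨k, rfl⟩ : ∃ i, k = i + 1 := ⟨k - 1, by omega⟩
    rw [show 4 * (k + 1) - 1 = 4 * k + 3 by omega, pow_add, pow_mul, Complex.I_pow_four, one_pow,
      one_mul, Complex.I_pow_three]
  rw [e, opIm, ← smul_neg, star_smul]
  have : (-Complex.I • Z - star (-Complex.I) • star Z) = (-Complex.I) • (Z + star Z) := by
    simp [smul_add, sub_eq_add_neg]
  rw [this, smul_smul, smul_neg, ← neg_smul]
  congr 1
  field_simp

lemma aux_fcal_star (P : Polynomial ℝ) (μ : Measure ℝ) [IsFiniteMeasure μ]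
    (hμ : μ (Set.Icc (-1 : ℝ) 1)ᶜ = 0) (l : ℕ) (Y : H →L[ℂ] H) (hY : star Y = Y)
    (h : IsUnit (1 - auxLam H * auxC Y)) : star (fcal P μ l Y) = fcal P μ l Y := by
  rw [fcal, star_add]
  congr 1
  · rw [Polynomial.aeval_eq_sum_range]
    simp [star_sum, star_smul, star_pow, hY]
  · rw [(aux_integral μ hμ Y l h).2, ← auxL_star]
    congr 1
    have hs : star (1 - auxLam H * auxC Y) = 1 - auxLam H * auxC Y := by
      ext1 s
      rw [ContinuousMap.star_apply, aux_apply]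
      simp [star_sub, star_smul, hY]
    have hc : star (auxC Y) = auxC Y := by
      ext1 s; exact hY
    have hcomm : Commute (auxC Y) (1 - auxLam H * auxC Y) := by
      refine (Commute.one_right _).sub_right ?_
      exact Commute.mul_right (auxLam_comm _).symm (Commute.refl _)
    exact aux_star_inv _ _ hc hs hcomm l
end main

theorem stmt11 [TopologicalSpace.SeparableSpace H] (hinf : ¬ FiniteDimensional ℂ H)
    (k : ℕ) (hk : 1 ≤ k) (P : Polynomial ℝ) (hP : P.degree < ((4 * k - 1 : ℕ) : WithBot ℕ))
    (μ : Measure ℝ) [IsFiniteMeasure μ] (hμ : μ (Set.Icc (-1 : ℝ) 1)ᶜ = 0)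
    (A B X : H →L[ℂ] H) (hA : IsSelfAdjoint A) (hB : IsSelfAdjoint B)
    (hBpos : B.IsPositive)
    (hspA : spectrum ℂ A ⊆ (fun x : ℝ => (x : ℂ)) '' Set.Ioo (-1 : ℝ) 1)
    (hX : X = A + Complex.I • B) :
    (∀ s ∈ Set.Icc (-1 : ℝ) 1, IsUnit (1 - (s : ℂ) • X)) ∧
    (∃ δ > (0 : ℝ), ∀ t : ℝ, |t| < δ →
        ∀ s ∈ Set.Icc (-1 : ℝ) 1, IsUnit (1 - (s : ℂ) • (A + t • B))) ∧
    Integrable (fun s : ℝ => X ^ (4 * k - 1) * Ring.inverse (1 - (s : ℂ) • X)) μ ∧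
    (∃ δ > (0 : ℝ), ∀ t : ℝ, |t| < δ →
        Integrable
          (fun s : ℝ =>
            (A + t • B) ^ (4 * k - 1) * Ring.inverse (1 - (s : ℂ) • (A + t • B))) μ) ∧
    ((∑ m ∈ Finset.Icc 1 (2 * k - 1),
        ((-1 : ℝ) ^ (m - 1) / (Nat.factorial (2 * m - 1) : ℝ)) •
          iteratedDeriv (2 * m - 1)
            (fun t : ℝ => fcal P μ (4 * k - 1) (A + t • B)) 0)
      - opIm (fcal P μ (4 * k - 1) X)).IsPositive := by
  have hnt : Nontrivial H := by
    by_contra h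
    rw [not_nontrivial_iff_subsingleton] at h
    exact hinf inferInstance
  have hUA : IsUnit (1 - auxLam H * auxC A) := (aux_isUnit A).2 (aux_unitA A hspA)
  have hUX : IsUnit (1 - auxLam H * auxC X) := (aux_isUnit X).2 (by
    rw [hX]; exact aux_unitX A B hA hB hspA)
  have hreal : ∀ t : ℝ, A + t • B = A + (t : ℂ) • B := fun t => by rw [Complex.coe_smul]
  have hctsline : Continuous fun t : ℝ => 1 - auxLam H * (auxC A + (t : ℂ) • auxC B) := by
    fun_prop
  have hev : ∀ᶠ t : ℝ in nhds 0, IsUnit (1 - auxLam H * auxC (A + t • B)) := by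
    have : {x : CK H | IsUnit x} ∈ nhds (1 - auxLam H * (auxC A + ((0 : ℝ) : ℂ) • auxC B)) := by
      refine Units.isOpen.mem_nhds ?_
      have h0 : auxC A + ((0 : ℝ) : ℂ) • auxC B = auxC A := by
        ext1 s; simp [auxC]
      rw [h0]
      exact hUA
    filter_upwards [hctsline.continuousAt this] with t ht
    rw [hreal, auxC_line]
    exact ht
  obtain ⟨δ, hδ, hδU⟩ := Metric.eventually_nhds_iff.1 hev
  simp only [dist_zero_right, Real.norm_eq_abs] at hδU
  refine ⟨(aux_isUnit X).1 hUX, ⟨δ, hδ, fun t ht => (aux_isUnit _).1 (hδU ht)⟩,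
    (aux_integral μ hμ X _ hUX).1, ⟨δ, hδ, fun t ht => (aux_integral μ hμ _ _ (hδU ht)).1⟩, ?_⟩
  obtain ⟨e, he⟩ := aux_poly A B (P.map Complex.ofRealHom) (4 * k - 1)
    (lt_of_le_of_lt Polynomial.degree_map_le hP)
  set R : CK H := Ring.inverse (1 - auxLam H * auxC A) with hR
  obtain ⟨c, hc⟩ := aux_res (auxC A) (auxC B) (auxLam H) R auxLam_comm
    (Ring.inverse_mul_cancel _ hUA) (4 * k - 1)
  set ν : Measure (Set.Icc (-1 : ℝ) 1) := μ.comap Subtype.val with hν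
  set W : ℂ → CK H := fun z => Ring.inverse (1 - auxLam H * (auxC A + z • auxC B)) with hW
  set C : ℕ → H →L[ℂ] H := fun j => e j + auxL ν (c j) with hC
  have hf : ∀ z : ℂ, IsUnit (1 - auxLam H * (auxC A + z • auxC B)) →
      fcal P μ (4 * k - 1) (A + z • B) = ∑ j ∈ Finset.range (4 * k - 1), z ^ j • C j +
        z ^ (4 * k - 1) • auxL ν ((R * auxC B) ^ (4 * k - 1) * W z) := by
    intro z hz
    rw [fcal, he, (aux_integral μ hμ _ _ (by rwa [auxC_line])).2, auxC_line,
      hc z (W z) (Ring.mul_inverse_cancel _ hz) (Ring.inverse_mul_cancel _ hz)]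
    rw [map_add, map_sum, map_smul, ← add_assoc]
    congr 1
    rw [← Finset.sum_add_distrib]
    refine Finset.sum_congr rfl fun j _ => ?_
    rw [map_smul, ← smul_add]
  set ρ : ℝ → H →L[ℂ] H := fun t => auxL ν ((R * auxC B) ^ (4 * k - 1) * W (t : ℂ)) with hρdef
  have hρ : AnalyticAt ℝ ρ 0 := by
    have h1 : AnalyticAt ℝ (fun t : ℝ => 1 - auxLam H * (auxC A + t • auxC B)) 0 := by
      have : AnalyticAt ℝ (fun t : ℝ => t • auxC B) 0 := analyticAt_id.smul analyticAt_const
      exact analyticAt_const.sub (analyticAt_const.mul (analyticAt_const.add this))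
    have h2 : AnalyticAt ℝ (Ring.inverse : CK H → CK H)
        (1 - auxLam H * (auxC A + (0 : ℝ) • auxC B)) := by
      have := analyticAt_inverse (𝕜 := ℝ) hUA.unit
      have h0 : auxC A + (0 : ℝ) • auxC B = auxC A := by
        ext1 s; simp [auxC]
      rw [h0]
      exact this
    have h3 := h2.comp_of_eq h1 rfl
    have h4 := ((auxL (H := H) ν).restrictScalars ℝ).analyticAt
      ((R * auxC B) ^ (4 * k - 1) * Ring.inverse (1 - auxLam H * (auxC A + (0 : ℝ) • auxC B)))
    exact h4.comp_of_eq (analyticAt_const.mul h3) rfl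
  have hFev : (fun t : ℝ => fcal P μ (4 * k - 1) (A + t • B)) =ᶠ[nhds 0]
      fun t => ∑ j ∈ Finset.range (4 * k - 1), t ^ j • C j + t ^ (4 * k - 1) • ρ t := by
    filter_upwards [hev] with t ht
    rw [hreal, auxC_line] at ht
    rw [hreal, hf t ht]
    simp only [← Complex.ofReal_pow, Complex.coe_smul, hρdef]
  have hD := aux_deriv _ C ρ _ hρ hFev
  have hFev' : (fun t : ℝ => fcal P μ (4 * k - 1) (A + t • B)) =ᶠ[nhds 0]
      fun t => ∑ j ∈ Finset.range (4 * k - 1), t ^ j • star (C j) +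
        t ^ (4 * k - 1) • star (ρ t) := by
    filter_upwards [hev, hFev] with t ht ht2
    rw [← aux_fcal_star P μ hμ _ _ ?_ ht, ht2]
    · simp [star_add, star_sum, star_smul]
    · rw [star_add, star_smul, hA.star_eq, hB.star_eq]; simp
  have hρ' : AnalyticAt ℝ (fun t => star (ρ t)) 0 :=
    ((starL' ℝ : (H →L[ℂ] H) ≃L[ℝ] (H →L[ℂ] H)).analyticAt _).comp hρ
  have hD' := aux_deriv _ (fun j => star (C j)) _ _ hρ' hFev'
  have hCs : ∀ j < 4 * k - 1, star (C j) = C j := by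
    intro j hj
    have h := (hD' j hj).symm.trans (hD j hj)
    have hne : (j.factorial : ℝ) ≠ 0 := by exact_mod_cast j.factorial_ne_zero
    exact smul_right_injective _ hne h
  have hl : 4 * k - 1 = 2 * (2 * k - 1) + 1 := by omega
  have hsum : (∑ m ∈ Finset.Icc 1 (2 * k - 1),
        ((-1 : ℝ) ^ (m - 1) / (Nat.factorial (2 * m - 1) : ℝ)) •
          iteratedDeriv (2 * m - 1)
            (fun t : ℝ => fcal P μ (4 * k - 1) (A + t • B)) 0) =
      opIm (∑ j ∈ Finset.range (4 * k - 1), Complex.I ^ j • C j) := by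
    rw [hl] at hCs
    conv_rhs => rw [hl, opIm_sum C _ hCs]
    refine Finset.sum_congr rfl fun m hm => ?_
    rw [Finset.mem_Icc] at hm
    rw [hD _ (by omega), smul_smul, div_mul_cancel₀]
    exact_mod_cast Nat.factorial_ne_zero _
  have hUX' : IsUnit (1 - auxLam H * (auxC A + Complex.I • auxC B)) := by
    rw [← auxC_line, ← hX]; exact hUX
  rw [hsum, hX, hf _ hUX', opIm_add, opIm_last _ k hk, sub_add_cancel_left, neg_neg,
    ← auxL_star, ← map_add, ← map_smul]
  refine auxL_pos ν _ fun s => ?_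
  have happ : ∀ z : ℂ, IsUnit (1 - auxLam H * (auxC A + z • auxC B)) →
      W z s = Ring.inverse (1 - ((s : ℝ) : ℂ) • (A + z • B)) := by
    intro z hz
    rw [hW]
    simp only
    rw [aux_inv_apply _ hz, ← auxC_line, aux_apply]
  have hRs : R s = Ring.inverse (1 - ((s : ℝ) : ℂ) • A) := by
    rw [hR, aux_inv_apply _ hUA, aux_apply]
  have hUAs := aux_unitA A hspA s s.2
  have hUXs := aux_unitX A B hA hB hspA s s.2
  have hDeq : 1 - ((s : ℝ) : ℂ) • (A + Complex.I • B) =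
      (1 - ((s : ℝ) : ℂ) • A) - (Complex.I * ((s : ℝ) : ℂ)) • B := by
    rw [smul_add, smul_smul, mul_comm, sub_sub]
  have key := aux_star (1 - ((s : ℝ) : ℂ) • A) (R s) B (W Complex.I s) s
    (by simp [star_sub, star_smul, hA.star_eq]) hB.star_eq
    (by rw [hRs]; exact Ring.mul_inverse_cancel _ hUAs)
    (by rw [hRs]; exact Ring.inverse_mul_cancel _ hUAs)
    (by rw [happ _ hUX', ← hDeq]; exact Ring.mul_inverse_cancel _ hUXs)
    (by rw [happ _ hUX', ← hDeq]; exact Ring.inverse_mul_cancel _ hUXs) (2 * k - 1)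
  rw [← hl] at key
  have hval : ((1 / 2 : ℂ) • ((R * auxC B) ^ (4 * k - 1) * W Complex.I +
      star ((R * auxC B) ^ (4 * k - 1) * W Complex.I))) s =
      (1 / 2 : ℂ) • ((R s * B) ^ (4 * k - 1) * W Complex.I s +
      star ((R s * B) ^ (4 * k - 1) * W Complex.I s)) := by
    rfl
  rw [hval, key, smul_smul, show (1 / 2 : ℂ) * 2 = 1 by norm_num, one_smul, mul_assoc]
  exact hBpos.conj_adjoint _
end

section
/- Let −∞ ≤ a < b ≤ ∞ and let f be a continuous real-valued function on (a, b) that admits a continuous extension F to {z ∈ ℂ : Im z > 0} ∪ (a, b) which is analytic on the open upper half-plane {z ∈ ℂ : Im z > 0} and satisfies F(x) = f(x) for all x ∈ (a, b). Then the following are equivalent: (i) f is operator monotone on (a, b), i.e. for all bounded self-adjoint operators A, B on H with spectra contained in (a, b), A ≤ B implies f(A) ≤ f(B); (ii) Im F(z) ≥ 0 for every z ∈ ℂ with Im z > 0. -/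
section LwHelpers
open Complex ComplexConjugate

theorem lw_reflect_cont (g : ℂ → ℂ)
    (hc : ContinuousOn g {z | ‖z‖ < 1 ∧ 0 ≤ z.im})
    (hr : ∀ z : ℂ, ‖z‖ < 1 → z.im = 0 → (g z).im = 0) :
    ContinuousOn (fun z => if 0 ≤ z.im then g z else conj (g (conj z))) (Metric.ball 0 1) := by
  apply ContinuousOn.if
  · rintro z ⟨hz, hz2⟩
    have : z.im = 0 := by
      have := Complex.frontier_setOf_le_im 0
      rw [this] at hz2
      exact hz2
    have h1 : conj z = z := Complex.conj_eq_iff_im.2 this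
    rw [h1]
    exact (Complex.conj_eq_iff_im.2 (hr z (by simpa using hz) this)).symm
  · refine hc.mono ?_
    rintro z ⟨hz, hz2⟩
    rw [(isClosed_le continuous_const Complex.continuous_im).closure_eq] at hz2
    exact ⟨by simpa using hz, hz2⟩
  · have : ContinuousOn (fun z : ℂ => conj (g (conj z))) {z | ‖z‖ < 1 ∧ z.im ≤ 0} := by
      refine Complex.continuous_conj.comp_continuousOn (hc.comp Complex.continuous_conj.continuousOn ?_)
      rintro z ⟨hz, hz2⟩
      exact ⟨by simpa using hz, by simpa using hz2⟩
    refine this.mono ?_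
    rintro z ⟨hz, hz2⟩
    refine ⟨by simpa using hz, ?_⟩
    have h3 : {a : ℂ | ¬ 0 ≤ a.im} ⊆ {a : ℂ | a.im ≤ 0} := fun a ha => (not_le.1 ha).le
    exact closure_minimal h3 (isClosed_le Complex.continuous_im continuous_const) hz2

theorem lw_reflect_diff (g : ℂ → ℂ)
    (hd : DifferentiableOn ℂ g {z | ‖z‖ < 1 ∧ 0 < z.im})
    (z : ℂ) (hz : ‖z‖ < 1) (hz0 : z.im ≠ 0) :
    DifferentiableAt ℂ (fun z => if 0 ≤ z.im then g z else conj (g (conj z))) z := by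
  have hopen : IsOpen {z : ℂ | ‖z‖ < 1 ∧ 0 < z.im} :=
    (isOpen_lt continuous_norm continuous_const).inter (isOpen_lt continuous_const Complex.continuous_im)
  rcases lt_or_gt_of_ne hz0 with h | h
  · have h1 : DifferentiableAt ℂ g (conj z) :=
      hd.differentiableAt (hopen.mem_nhds ⟨by simpa using hz, by simpa using h⟩)
    have h2 : DifferentiableAt ℂ (conj ∘ g ∘ conj) z := by
      have := h1.conj_conj
      simpa using this
    refine h2.congr_of_eventuallyEq ?_
    filter_upwards [(isOpen_lt Complex.continuous_im continuous_const).mem_nhds h] with w hw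
    have : ¬ 0 ≤ w.im := not_le.2 hw
    simp [this]
  · have h1 : DifferentiableAt ℂ g z := hd.differentiableAt (hopen.mem_nhds ⟨hz, h⟩)
    refine h1.congr_of_eventuallyEq ?_
    filter_upwards [(isOpen_lt continuous_const Complex.continuous_im).mem_nhds h] with w hw
    have : 0 ≤ w.im := le_of_lt hw
    simp [this]

theorem lw_morera (G : ℂ → ℂ) (hc : ContinuousOn G (Metric.ball 0 1))
    (hd : ∀ z : ℂ, ‖z‖ < 1 → z.im ≠ 0 → DifferentiableAt ℂ G z) :
    DifferentiableOn ℂ G (Metric.ball 0 1) := by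
  refine IsExactOn.differentiableOn Metric.isOpen_ball (IsConservativeOn.isExactOn_ball hc ?_)
  intro z w hzw
  rw [← add_eq_zero_iff_eq_neg, wedgeIntegral_add_wedgeIntegral_eq]
  -- points in ball
  have hmem : ∀ x ∈ Set.uIcc z.re w.re, ∀ y ∈ Set.uIcc z.im w.im, ∀ t : ℝ, |t| ≤ |y| →
      ((x : ℂ) + t * I) ∈ Metric.ball (0:ℂ) 1 := by
    intro x hx y hy t ht
    have h1 : ((x : ℂ) + y * I) ∈ Metric.ball (0:ℂ) 1 := by
      apply hzw
      simp [Rectangle, mem_reProdIm, hx, hy]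
    rw [mem_ball_zero_iff] at h1 ⊢
    refine lt_of_le_of_lt ?_ h1
    rw [Complex.norm_def, Complex.norm_def]
    apply Real.sqrt_le_sqrt
    simp only [Complex.normSq_add_mul_I]
    have := sq_le_sq.2 ht
    linarith
  have hseg : ∀ y ∈ Set.uIcc z.im w.im, ∀ t ∈ Set.uIcc 0 y, |t| ≤ |y| := by
    intro y hy t ht
    rcases Set.mem_uIcc.1 ht with h | h
    · rw [abs_of_nonneg h.1, abs_of_nonneg (h.1.trans h.2)]; exact h.2
    · rw [abs_of_nonpos h.2, abs_of_nonpos (h.1.trans h.2)]; linarith [h.1]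
  have key : ∀ y ∈ Set.uIcc z.im w.im,
      (∫ x : ℝ in z.re..w.re, G (x + (0:ℝ) * I)) -
      (∫ x : ℝ in z.re..w.re, G (x + y * I)) +
      I • (∫ t : ℝ in (0:ℝ)..y, G (w.re + t * I)) -
      I • (∫ t : ℝ in (0:ℝ)..y, G (z.re + t * I)) = 0 := by
    intro y hy
    have := integral_boundary_rect_eq_zero_of_continuousOn_of_differentiableOn G
      (z.re + (0:ℝ) * I) (w.re + y * I) ?_ ?_
    · simpa using this
    · refine hc.mono ?_
      intro u hu
      simp only [mem_reProdIm] at hu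
      have := hmem u.re (by simpa using hu.1) y hy u.im (hseg y hy _ (by simpa using hu.2))
      rwa [Complex.re_add_im] at this
    · intro u hu
      simp only [mem_reProdIm] at hu
      obtain ⟨hu1, hu2⟩ := hu
      simp at hu1 hu2
      have hu1' : u.re ∈ Set.uIcc z.re w.re := by
        rw [Set.mem_uIcc]; grind
      have hu2' : u.im ∈ Set.uIcc 0 y := by
        rw [Set.mem_uIcc]; grind
      have := hmem u.re hu1' y hy u.im (hseg y hy _ hu2')
      rw [Complex.re_add_im] at this
      refine (hd u (by simpa using this) ?_).differentiableWithinAt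
      grind
  have hint : ∀ x ∈ Set.uIcc z.re w.re, ∀ y ∈ Set.uIcc z.im w.im,
      IntervalIntegrable (fun t : ℝ => G (x + t * I)) MeasureTheory.volume 0 y := by
    intro x hx y hy
    apply ContinuousOn.intervalIntegrable
    refine hc.comp (by fun_prop) ?_
    intro t ht
    exact hmem x hx y hy t (hseg y hy t ht)
  have e1 := key z.im Set.left_mem_uIcc
  have e2 := key w.im Set.right_mem_uIcc
  have s1 : ∀ x ∈ Set.uIcc z.re w.re, (∫ t : ℝ in z.im..w.im, G (x + t * I)) =
     (∫ t : ℝ in (0:ℝ)..w.im, G (x + t * I)) - ∫ t : ℝ in (0:ℝ)..z.im, G (x + t * I) := by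
    intro x hx
    rw [intervalIntegral.integral_interval_sub_left (hint x hx _ Set.right_mem_uIcc) (hint x hx _ Set.left_mem_uIcc)]
  rw [s1 _ Set.left_mem_uIcc, s1 _ Set.right_mem_uIcc]
  simp only [smul_eq_mul] at e1 e2 ⊢
  linear_combination e2 - e1

theorem lw_reflect (g : ℂ → ℂ)
    (hc : ContinuousOn g {z | ‖z‖ < 1 ∧ 0 ≤ z.im})
    (hd : DifferentiableOn ℂ g {z | ‖z‖ < 1 ∧ 0 < z.im})
    (hr : ∀ z : ℂ, ‖z‖ < 1 → z.im = 0 → (g z).im = 0) :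
    DifferentiableOn ℂ (fun z => if 0 ≤ z.im then g z else conj (g (conj z))) (Metric.ball 0 1) :=
  lw_morera _ (lw_reflect_cont g hc hr) (fun z hz hz0 => lw_reflect_diff g hd z hz hz0)
theorem lw_one_add_sq_ne (z : ℂ) (hz : ‖z‖ < 1) : 1 + z ^ 2 ≠ 0 := by
  intro h
  have h1 : z ^ 2 = -1 := by linear_combination h
  have h2 : ‖z‖ ^ 2 = 1 := by rw [← norm_pow, h1]; simp
  nlinarith [norm_nonneg z]

theorem lw_psi_im (z : ℂ) :
    (2 * z / (1 + z ^ 2)).im = 2 * z.im * (1 - ‖z‖ ^ 2) / Complex.normSq (1 + z ^ 2) := by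
  rw [Complex.div_im, ← Complex.normSq_eq_norm_sq, Complex.normSq_apply z]
  simp [pow_two]
  ring

theorem lw_psi_re_lt (s : ℝ) (hs : |s| < 1) : |2 * s / (1 + s ^ 2)| < 1 := by
  have h : 0 < 1 + s ^ 2 := by positivity
  rw [abs_lt] at *
  constructor
  · rw [lt_div_iff₀ h]; nlinarith
  · rw [div_lt_iff₀ h]; nlinarith

theorem lw_psi_surj (w : ℂ) (hw : 0 < w.im) :
    ∃ z : ℂ, ‖z‖ < 1 ∧ 0 < z.im ∧ 2 * z / (1 + z ^ 2) = w := by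
  have hw0 : w ≠ 0 := by rintro rfl; simp at hw
  obtain ⟨d, hd⟩ : ∃ d : ℂ, d ^ 2 = 1 - w ^ 2 := IsAlgClosed.exists_pow_nat_eq _ (by norm_num)
  have key : ∀ z : ℂ, w * z ^ 2 - 2 * z + w = 0 → ‖z‖ ≤ 1 →
      ‖z‖ < 1 ∧ 0 < z.im ∧ 2 * z / (1 + z ^ 2) = w := by
    intro z hz hz1
    have hne : 1 + z ^ 2 ≠ 0 := by
      intro h
      have : z = 0 := by linear_combination (w * h - hz) / 2
      simp [this] at h
    have he : 2 * z / (1 + z ^ 2) = w := by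
      rw [div_eq_iff hne]; linear_combination -hz
    have him := lw_psi_im z
    rw [he] at him
    have hn : 0 < Complex.normSq (1 + z ^ 2) := Complex.normSq_pos.2 hne
    rw [him] at hw
    have hw2 : 0 < 2 * z.im * (1 - ‖z‖ ^ 2) := by
      by_contra hcon
      exact absurd hw (not_lt.2 (div_nonpos_of_nonpos_of_nonneg (not_lt.1 hcon) hn.le))
    have hz2 : 0 ≤ 1 - ‖z‖ ^ 2 := by nlinarith [norm_nonneg z]
    have hz3 : 0 < 1 - ‖z‖ ^ 2 := lt_of_le_of_ne hz2 (by intro h; rw [← h] at hw2; simp at hw2)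
    refine ⟨by nlinarith [norm_nonneg z], ?_, he⟩
    by_contra hcon
    nlinarith [not_lt.1 hcon]
  have hp : ‖(1 + d) / w‖ * ‖(1 - d) / w‖ = 1 := by
    rw [← norm_mul]
    have : (1 + d) / w * ((1 - d) / w) = 1 := by
      field_simp; linear_combination -hd
    rw [this]; simp
  have r1 : w * ((1 + d) / w) ^ 2 - 2 * ((1 + d) / w) + w = 0 := by
    field_simp; linear_combination hd
  have r2 : w * ((1 - d) / w) ^ 2 - 2 * ((1 - d) / w) + w = 0 := by
    field_simp; linear_combination hd
  rcases le_total ‖(1 + d) / w‖ 1 with h | h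
  · exact ⟨_, key _ r1 h⟩
  · refine ⟨_, key _ r2 ?_⟩
    nlinarith [norm_nonneg ((1 - d) / w)]

theorem lw_exists_G (S : Set ℝ) (f : ℝ → ℝ) (F : ℂ → ℂ)
    (hFcont : ContinuousOn F ({z : ℂ | 0 < z.im} ∪ ((fun x : ℝ => (x : ℂ)) '' S)))
    (hFan : DifferentiableOn ℂ F {z : ℂ | 0 < z.im})
    (hFf : ∀ x ∈ S, F (x : ℂ) = ((f x : ℝ) : ℂ))
    (c ρ : ℝ) (hρ : 0 < ρ) (hsub : ∀ x, |x - c| < ρ → x ∈ S) :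
    ∃ G : ℂ → ℂ, DifferentiableOn ℂ G (Metric.ball 0 1) ∧
      (∀ z : ℂ, ‖z‖ < 1 → 0 < z.im → G z = F (c + ρ * (2 * z / (1 + z ^ 2)))) ∧
      (∀ s : ℝ, |s| < 1 → G s = f (c + ρ * (2 * s / (1 + s ^ 2)))) ∧
      (∀ z : ℂ, ‖z‖ < 1 → G (conj z) = conj (G z)) := by
  set g : ℂ → ℂ := fun z => F (c + ρ * (2 * z / (1 + z ^ 2))) with hg
  have hup : ∀ z : ℂ, ‖z‖ < 1 → 0 < z.im → 0 < (c + ρ * (2 * z / (1 + z ^ 2)) : ℂ).im := by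
    intro z hz hz0
    have : (c + ρ * (2 * z / (1 + z ^ 2)) : ℂ).im = ρ * (2 * z / (1 + z ^ 2)).im := by
      rw [Complex.add_im, Complex.im_ofReal_mul]; simp
    rw [this, lw_psi_im]
    have := Complex.normSq_pos.2 (lw_one_add_sq_ne z hz)
    have h2 : 0 < 1 - ‖z‖ ^ 2 := by nlinarith [norm_nonneg z]
    positivity
  have hS : ∀ s : ℝ, |s| < 1 → c + ρ * (2 * s / (1 + s ^ 2)) ∈ S := by
    intro s hs
    apply hsub
    rw [add_sub_cancel_left, abs_mul, abs_of_pos hρ]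
    have := lw_psi_re_lt s hs
    nlinarith
  have hreal : ∀ s : ℝ, |s| < 1 → g s = f (c + ρ * (2 * s / (1 + s ^ 2))) := by
    intro s hs
    rw [← hFf _ (hS s hs)]
    simp [hg]
  have hzre : ∀ z : ℂ, ‖z‖ < 1 → z.im = 0 → ((z.re : ℝ) : ℂ) = z ∧ |z.re| < 1 := by
    intro z hz h0
    have : ((z.re : ℝ) : ℂ) = z := by apply Complex.ext <;> simp [h0]
    refine ⟨this, ?_⟩
    rw [← this] at hz
    simpa using hz
  have hr : ∀ z : ℂ, ‖z‖ < 1 → z.im = 0 → (g z).im = 0 := by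
    intro z hz h0
    obtain ⟨h1, h2⟩ := hzre z hz h0
    rw [← h1, hreal _ h2, Complex.ofReal_im]
  have hd : DifferentiableOn ℂ g {z | ‖z‖ < 1 ∧ 0 < z.im} := by
    apply hFan.comp (t := {z : ℂ | 0 < z.im})
    · intro z hz
      have := lw_one_add_sq_ne z hz.1
      apply DifferentiableAt.differentiableWithinAt
      fun_prop (disch := assumption)
    · intro z hz
      exact hup z hz.1 hz.2
  have hc : ContinuousOn g {z | ‖z‖ < 1 ∧ 0 ≤ z.im} := by
    apply hFcont.comp
    · intro z hz
      have := lw_one_add_sq_ne z hz.1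
      apply ContinuousAt.continuousWithinAt
      fun_prop (disch := assumption)
    · intro z hz
      rcases hz.2.eq_or_lt with h | h
      · right
        obtain ⟨h1, h2⟩ := hzre z hz.1 h.symm
        refine ⟨_, hS _ h2, ?_⟩
        push_cast
        rw [h1]
      · left
        exact hup z hz.1 h
  refine ⟨_, lw_reflect g hc hd hr, ?_, ?_, ?_⟩
  · intro z hz h0
    simp [h0.le, hg]
  · intro s hs
    simp only [Complex.ofReal_im, le_refl, if_true]
    exact hreal s hs
  · intro z hz
    rcases lt_trichotomy z.im 0 with h | h | h
    · simp [h.le, not_le.2 h]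
    · have h1 : conj z = z := Complex.conj_eq_iff_im.2 h
      simp only [h1, h, le_refl, if_true]
      exact (Complex.conj_eq_iff_im.2 (hr z hz h)).symm
    · simp [h.le, not_le.2 h]

theorem lw_alg (E x s d : ℂ) (a0 : E ≠ 0) (a1 : E - x ≠ 0) (a2 : 1 - x * E ≠ 0) (hd : d ≠ 0)
    (hprod : (E - x) * (1 - x * E) = E * d) (hsin : E ^ 2 - 1 = 2 * I * s * E) :
    E * (E - x)⁻¹ - (1 - x * E)⁻¹ = -2 * I * (s * (x / d)) := by
  have h1 : d = (E - x) * (1 - x * E) / E := by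
    rw [eq_div_iff a0, hprod]; ring
  have h2 : 2 * I * s = (E ^ 2 - 1) / E := by
    rw [eq_div_iff a0, hsin]
  have : -2 * I * (s * (x / d)) = - (2 * I * s) * x / d := by ring
  rw [this, h1, h2, ← div_eq_mul_inv, inv_eq_one_div, div_sub_div _ _ a1 a2, div_div_eq_mul_div]
  congr 1
  field_simp
  ring

theorem lw_int_rep (u : ℂ → ℂ) (R : ℝ) (hR : 1 < R) (hu : DifferentiableOn ℂ u (Metric.ball 0 R))
    (x : ℝ) (hx : |x| < 1) :
    u x - u 0 = (1 / (2 * Real.pi) : ℝ) * ∫ θ in (0:ℝ)..2 * Real.pi,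
      u (exp (θ * I)) * ((-2 * I) * ((Real.sin θ * (x / (1 - 2 * x * Real.cos θ + x ^ 2)) : ℝ) : ℂ)) := by
  have hu' : DiffContOnCl ℂ u (Metric.ball 0 1) := by
    apply DifferentiableOn.diffContOnCl
    rw [closure_ball _ one_ne_zero]
    exact hu.mono (Metric.closedBall_subset_ball hR)
  have hne : ∀ z : ℂ, ‖z‖ ≤ 1 → 1 - x * z ≠ 0 := by
    intro z hz h
    have : ‖(x:ℂ) * z‖ = 1 := by rw [show (x:ℂ) * z = 1 by linear_combination -h]; simp
    rw [norm_mul, Complex.norm_real, Real.norm_eq_abs] at this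
    nlinarith [abs_nonneg x, norm_nonneg z]
  have hv' : DiffContOnCl ℂ (fun z : ℂ => (1 - (x:ℂ) * z)⁻¹ * u z) (Metric.ball 0 1) := by
    apply DifferentiableOn.diffContOnCl
    rw [closure_ball _ one_ne_zero]
    intro z hz
    have h1 := hne z (by simpa using hz)
    have h2 : DifferentiableAt ℂ u z := hu.differentiableAt
      (Metric.isOpen_ball.mem_nhds (Metric.closedBall_subset_ball hR hz))
    apply DifferentiableAt.differentiableWithinAt
    fun_prop (disch := assumption)
  have e1 := hu'.two_pi_i_inv_smul_circleIntegral_sub_inv_smul (w := (x:ℂ)) (by simpa using hx)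
  have e2 := hv'.two_pi_i_inv_smul_circleIntegral_sub_inv_smul (w := 0) (by simp)
  have hcirc : Continuous (fun θ : ℝ => u (exp (θ * I))) := by
    have : ContinuousOn u (Metric.ball 0 R) := hu.continuousOn
    apply this.comp_continuous (by fun_prop)
    intro θ
    simpa [Complex.norm_exp_ofReal_mul_I] using hR
  have hn : ∀ θ : ℝ, ‖exp (θ * I)‖ ≤ 1 := fun θ => (Complex.norm_exp_ofReal_mul_I θ).le
  have hn1 : ∀ θ : ℝ, exp (θ * I) - x ≠ 0 := by
    intro θ h
    have h2 : exp (θ * I) = x := by linear_combination h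
    have := Complex.norm_exp_ofReal_mul_I θ
    rw [h2] at this
    simp at this
    linarith
  have hn2 : ∀ θ : ℝ, 1 - x * exp (θ * I) ≠ 0 := fun θ => hne _ (hn θ)
  have hcont1 : Continuous fun θ : ℝ => (exp (θ * I) * I) * ((exp (θ * I) - x)⁻¹ * u (exp (θ * I))) := by
    have h1 : Continuous fun θ : ℝ => (exp (θ * I) - x)⁻¹ := Continuous.inv₀ (by fun_prop) hn1
    exact (by fun_prop : Continuous fun θ : ℝ => exp (θ * I) * I).mul (h1.mul hcirc)
  have hcont2 : Continuous fun θ : ℝ => (exp (θ * I) * I) * ((exp (θ * I))⁻¹ * ((1 - x * exp (θ * I))⁻¹ * u (exp (θ * I)))) := by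
    have h1 : Continuous fun θ : ℝ => (1 - x * exp (θ * I))⁻¹ := Continuous.inv₀ (by fun_prop) hn2
    have h2 : Continuous fun θ : ℝ => (exp (θ * I))⁻¹ := Continuous.inv₀ (by fun_prop) (fun θ => exp_ne_zero _)
    exact (by fun_prop : Continuous fun θ : ℝ => exp (θ * I) * I).mul (h2.mul (h1.mul hcirc))
  simp only [circleIntegral, deriv_circleMap, circleMap, zero_add, ofReal_one, one_mul, smul_eq_mul, sub_zero, mul_zero, inv_one] at e1 e2
  rw [← e1, ← e2, ← mul_sub, ← intervalIntegral.integral_sub (hcont1.intervalIntegrable _ _) (hcont2.intervalIntegrable _ _),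
    ← intervalIntegral.integral_const_mul, ← intervalIntegral.integral_const_mul]
  apply intervalIntegral.integral_congr
  intro θ _
  simp only
  have hden : (1 - 2 * x * Real.cos θ + x ^ 2 : ℝ) ≠ 0 := by
    have h1 := Real.neg_one_le_cos θ
    have h2 := Real.cos_le_one θ
    have h3 := abs_lt.1 hx
    have : 0 < (1 - 2 * x * Real.cos θ + x ^ 2 : ℝ) := by
      have h4 : 0 < 1 - x ^ 2 := by nlinarith
      have h5 := Real.sin_sq_add_cos_sq θ
      nlinarith [sq_nonneg (Real.cos θ - x), sq_nonneg (x * Real.sin θ), sq_nonneg (1 - x * Real.cos θ), sq_nonneg (Real.sin θ)]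
    exact this.ne'
  have hden' : (1 - 2 * x * cos θ + x ^ 2 : ℂ) ≠ 0 := by exact_mod_cast hden
  have a1 := hn1 θ
  have a2 := hn2 θ
  have a0 := exp_ne_zero (θ * I)
  have hprod : (exp (θ * I) - x) * (1 - x * exp (θ * I)) = exp (θ * I) * (1 - 2 * x * cos θ + x ^ 2) := by
    have : exp (θ * I) * exp (-θ * I) = 1 := by rw [← exp_add]; simp
    rw [Complex.cos]
    linear_combination (x : ℂ) * this
  have hsin : (exp (θ * I)) ^ 2 - 1 = 2 * I * sin θ * exp (θ * I) := by
    have : exp (θ * I) * exp (-θ * I) = 1 := by rw [← exp_add]; simp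
    rw [Complex.sin]
    linear_combination -(exp (θ * I) * exp (-θ * I) - (exp (θ * I)) ^ 2) * Complex.I_sq + this
  push_cast
  have main := lw_alg (exp (θ * I)) x (sin θ) _ a0 a1 a2 hden' hprod hsin
  rw [← main]
  have hpi : (Real.pi : ℂ) ≠ 0 := by exact_mod_cast Real.pi_ne_zero
  generalize hE : exp (θ * I) = E at *
  field_simp
section lwops
variable {H : Type*} [NormedAddCommGroup H] [InnerProductSpace ℂ H] [CompleteSpace H]

theorem lw_cfc_aff (A : H →L[ℂ] H) (hA : IsSelfAdjoint A) (α β : ℝ) :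
    cfc (fun x : ℝ => α + β * x) A = algebraMap ℝ _ α + β • A := by
  rw [cfc_const_add α (fun x => β * x) A, cfc_const_mul β (fun x => x) A, cfc_id' ℝ A]

theorem lw_inv_anti (A B : H →L[ℂ] H) (hA : IsSelfAdjoint A) (hB : IsSelfAdjoint B)
    (α β : ℝ) (hAB : β • A ≤ β • B)
    (hA' : ∀ x ∈ spectrum ℝ A, 0 < α + β * x) (hB' : ∀ x ∈ spectrum ℝ B, 0 < α + β * x) :
    cfc (fun x : ℝ => (α + β * x)⁻¹) B ≤ cfc (fun x : ℝ => (α + β * x)⁻¹) A := by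
  rw [cfc_inv (fun x : ℝ => α + β * x) B (fun x hx => (hB' x hx).ne'),
    cfc_inv (fun x : ℝ => α + β * x) A (fun x hx => (hA' x hx).ne')]
  apply CStarAlgebra.ringInverse_le_ringInverse
  · rw [lw_cfc_aff A hA, lw_cfc_aff B hB]
    exact add_le_add_right hAB _
  · rw [cfc_isStrictlyPositive_iff (fun x : ℝ => α + β * x) A]
    exact hA'

theorem lw_cfc_affinv (T : H →L[ℂ] H) (hT : IsSelfAdjoint T) (p q α β : ℝ)
    (hne : ∀ x ∈ spectrum ℝ T, α + β * x ≠ 0) :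
    cfc (fun x : ℝ => p + q * (α + β * x)⁻¹) T
      = algebraMap ℝ _ p + q • cfc (fun x : ℝ => (α + β * x)⁻¹) T := by
  have hc : ContinuousOn (fun x : ℝ => (α + β * x)⁻¹) (spectrum ℝ T) :=
    ContinuousOn.inv₀ (by fun_prop) hne
  rw [cfc_const_add p (fun x => q * (α + β * x)⁻¹) T (continuousOn_const.mul hc) hT,
    cfc_const_mul q (fun x => (α + β * x)⁻¹) T hc]

theorem lw_k_mono (A B : H →L[ℂ] H) (hA : IsSelfAdjoint A) (hB : IsSelfAdjoint B) (hAB : A ≤ B)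
    (c ρ : ℝ) (hρ : 0 < ρ) (hA' : ∀ x ∈ spectrum ℝ A, |x - c| < ρ)
    (hB' : ∀ x ∈ spectrum ℝ B, |x - c| < ρ) (t : ℝ) (ht : |t| ≤ 1) :
    cfc (fun x : ℝ => (x - c) / (ρ - t * (x - c))) A
      ≤ cfc (fun x : ℝ => (x - c) / (ρ - t * (x - c))) B := by
  have hpos : ∀ x, |x - c| < ρ → 0 < (ρ + t * c) + (-t) * x := by
    intro x hx
    have h1 : t * (x - c) ≤ |x - c| := by
      calc t * (x - c) ≤ |t * (x - c)| := le_abs_self _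
        _ = |t| * |x - c| := abs_mul _ _
        _ ≤ 1 * |x - c| := by gcongr
        _ = _ := one_mul _
    nlinarith
  by_cases h0 : t = 0
  · subst h0
    have e : ∀ T : H →L[ℂ] H, IsSelfAdjoint T →
        cfc (fun x : ℝ => (x - c) / (ρ - 0 * (x - c))) T = algebraMap ℝ _ (-c/ρ) + (1/ρ) • T := by
      intro T hT
      rw [← lw_cfc_aff T hT]
      apply cfc_congr
      intro x hx
      simp only
      ring
    rw [e A hA, e B hB]
    exact add_le_add_right (smul_le_smul_of_nonneg_left hAB (by positivity)) _
  have e : ∀ T : H →L[ℂ] H, IsSelfAdjoint T → (∀ x ∈ spectrum ℝ T, |x - c| < ρ) →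
      cfc (fun x : ℝ => (x - c) / (ρ - t * (x - c))) T =
        algebraMap ℝ _ (-1/t) + (ρ / t) • cfc (fun x : ℝ => ((ρ + t * c) + (-t) * x)⁻¹) T := by
    intro T hT hT'
    rw [← lw_cfc_affinv T hT _ _ _ _ (fun x hx => (hpos x (hT' x hx)).ne')]
    apply cfc_congr
    intro x hx
    have := (hpos x (hT' x hx)).ne'
    have h2 : ρ - t * (x - c) = (ρ + t * c) + (-t) * x := by ring
    simp only
    rw [h2, div_eq_iff this, add_mul, mul_assoc, inv_mul_cancel₀ this]
    field_simp
    ring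
  rw [e A hA hA', e B hB hB']
  rcases lt_or_gt_of_ne h0 with h | h
  · have h1 := lw_inv_anti A B hA hB (ρ + t * c) (-t)
      (smul_le_smul_of_nonneg_left hAB (by linarith))
      (fun x hx => hpos x (hA' x hx)) (fun x hx => hpos x (hB' x hx))
    exact add_le_add_right (smul_le_smul_of_nonpos_left h1 (div_nonpos_of_nonneg_of_nonpos hρ.le h.le)) _
  · have h1 := lw_inv_anti B A hB hA (ρ + t * c) (-t)
      (by rw [neg_smul, neg_smul]; exact neg_le_neg (smul_le_smul_of_nonneg_left hAB (by linarith)))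
      (fun x hx => hpos x (hB' x hx)) (fun x hx => hpos x (hA' x hx))
    exact add_le_add_right (smul_le_smul_of_nonneg_left h1 (by positivity)) _

theorem lw_int_mono (A B : H →L[ℂ] H) (hA : IsSelfAdjoint A) (hB : IsSelfAdjoint B) (hAB : A ≤ B)
    (c ρ : ℝ) (hρ : 0 < ρ) (hA' : ∀ x ∈ spectrum ℝ A, |x - c| < ρ)
    (hB' : ∀ x ∈ spectrum ℝ B, |x - c| < ρ) (w : ℝ → ℝ) (hw : Continuous w) (hw0 : ∀ θ, 0 ≤ w θ) :
    cfc (fun x : ℝ => ∫ θ in Set.Icc 0 (2 * Real.pi), w θ * ((x - c) / (ρ - Real.cos θ * (x - c)))) A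
      ≤ cfc (fun x : ℝ => ∫ θ in Set.Icc 0 (2 * Real.pi), w θ * ((x - c) / (ρ - Real.cos θ * (x - c)))) B := by
  have hne : ∀ x, |x - c| < ρ → ∀ θ, ρ - Real.cos θ * (x - c) ≠ 0 := by
    intro x hx θ
    have h1 : Real.cos θ * (x - c) ≤ |x - c| := by
      calc Real.cos θ * (x - c) ≤ |Real.cos θ * (x - c)| := le_abs_self _
        _ = |Real.cos θ| * |x - c| := abs_mul _ _
        _ ≤ 1 * |x - c| := by gcongr; exact Real.abs_cos_le_one θ
        _ = _ := one_mul _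
    intro h
    linarith
  have key : ∀ T : H →L[ℂ] H, IsSelfAdjoint T → (∀ x ∈ spectrum ℝ T, |x - c| < ρ) →
      (cfc (fun x : ℝ => ∫ θ in Set.Icc 0 (2 * Real.pi), w θ * ((x - c) / (ρ - Real.cos θ * (x - c)))) T
        = ∫ θ in Set.Icc 0 (2 * Real.pi), cfc (fun x : ℝ => w θ * ((x - c) / (ρ - Real.cos θ * (x - c)))) T)
      ∧ MeasureTheory.IntegrableOn (fun θ => cfc (fun x : ℝ => w θ * ((x - c) / (ρ - Real.cos θ * (x - c)))) T)
        (Set.Icc 0 (2 * Real.pi)) := by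
    intro T hT hT'
    have hc : ContinuousOn (Function.uncurry (fun θ x : ℝ => w θ * ((x - c) / (ρ - Real.cos θ * (x - c)))))
        (Set.Icc 0 (2 * Real.pi) ×ˢ spectrum ℝ T) := by
      apply ContinuousOn.mul
      · exact (hw.comp continuous_fst).continuousOn
      · apply ContinuousOn.div
        · fun_prop
        · fun_prop
        · rintro ⟨θ, x⟩ ⟨_, hx⟩
          exact hne x (hT' x hx) θ
    obtain ⟨C, hC⟩ := (isCompact_Icc.prod (spectrum.isCompact (𝕜 := ℝ) T)).exists_bound_of_continuousOn hc
    have hb : ∀ᵐ θ ∂(MeasureTheory.volume.restrict (Set.Icc 0 (2 * Real.pi))), ∀ z ∈ spectrum ℝ T,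
        ‖w θ * ((z - c) / (ρ - Real.cos θ * (z - c)))‖ ≤ (fun _ : ℝ => C) θ :=
      MeasureTheory.ae_restrict_of_forall_mem measurableSet_Icc fun θ hθ z hz => hC (θ, z) ⟨hθ, hz⟩
    have hi : MeasureTheory.HasFiniteIntegral (fun _ : ℝ => C)
        (MeasureTheory.volume.restrict (Set.Icc 0 (2 * Real.pi))) :=
      (MeasureTheory.integrable_const C).2
    exact ⟨cfc_setIntegral measurableSet_Icc _ _ T hc hb hi hT,
      integrableOn_cfc measurableSet_Icc _ _ T hc hb hi hT⟩
  obtain ⟨eA, iA⟩ := key A hA hA'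
  obtain ⟨eB, iB⟩ := key B hB hB'
  rw [eA, eB]
  apply MeasureTheory.integral_mono iA iB
  intro θ
  simp only
  have hcc : ∀ T : H →L[ℂ] H, (∀ x ∈ spectrum ℝ T, |x - c| < ρ) →
      ContinuousOn (fun x : ℝ => (x - c) / (ρ - Real.cos θ * (x - c))) (spectrum ℝ T) := by
    intro T hT'
    exact ContinuousOn.div (by fun_prop) (by fun_prop) (fun x hx => hne x (hT' x hx) θ)
  rw [cfc_const_mul (w θ) _ A (hcc A hA'), cfc_const_mul (w θ) _ B (hcc B hB')]
  exact smul_le_smul_of_nonneg_left (lw_k_mono A B hA hB hAB c ρ hρ hA' hB' _ (Real.abs_cos_le_one θ)) (hw0 θ)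

end lwops
noncomputable def lwSig (y : ℝ) : ℝ := y / (1 + Real.sqrt (1 - y ^ 2))

theorem lwSig_abs (y : ℝ) (hy : |y| < 1) : |lwSig y| < 1 := by
  have h1 : 0 < 1 - y ^ 2 := by nlinarith [abs_lt.1 hy, sq_abs y, abs_nonneg y]
  have h2 := Real.sqrt_pos.2 h1
  unfold lwSig
  rw [abs_div, abs_of_pos (by positivity : 0 < 1 + Real.sqrt (1 - y ^ 2)), div_lt_one (by positivity)]
  linarith

theorem lwSig_quad (y : ℝ) (hy : |y| < 1) : 2 * lwSig y = y * (1 + lwSig y ^ 2) := by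
  have h1 : 0 < 1 - y ^ 2 := by nlinarith [abs_lt.1 hy, sq_abs y, abs_nonneg y]
  have h2 := Real.sqrt_pos.2 h1
  have h3 := Real.sq_sqrt h1.le
  unfold lwSig
  generalize Real.sqrt (1 - y ^ 2) = q at *
  have h4 : 1 + q ≠ 0 := by positivity
  field_simp
  linear_combination - y * h3

theorem lwSig_psi (y : ℝ) (hy : |y| < 1) : 2 * lwSig y / (1 + lwSig y ^ 2) = y := by
  rw [div_eq_iff (by positivity)]
  exact lwSig_quad y hy

theorem lwSig_cont : Continuous lwSig := by
  unfold lwSig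
  apply Continuous.div (by fun_prop) (by fun_prop)
  intro y
  positivity

section lwops2
variable {H : Type*} [NormedAddCommGroup H] [InnerProductSpace ℂ H] [CompleteSpace H]

theorem lw_w_nonneg (G : ℂ → ℂ)
    (hGc : ∀ z : ℂ, ‖z‖ < 1 → G (conj z) = conj (G z))
    (hIm : ∀ z : ℂ, ‖z‖ < 1 → 0 < z.im → 0 ≤ (G z).im) (z : ℂ) (hz : ‖z‖ < 1) :
    0 ≤ z.im * (G z).im := by
  rcases lt_trichotomy z.im 0 with h | h | h
  · have := hIm (conj z) (by simpa using hz) (by simpa using h)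
    rw [hGc z hz, conj_im] at this
    nlinarith
  · simp [h]
  · exact mul_nonneg h.le (hIm z hz h)

theorem lw_hr (G : ℂ → ℂ) (hG : DifferentiableOn ℂ G (Metric.ball 0 1)) (c ρ r : ℝ) (hρ : 0 < ρ)
    (hr : 0 < r) (hr1 : r < 1) (x : ℝ) (hx : |x - c| < ρ) :
    (G (r * lwSig ((x - c) / ρ) : ℝ)).re = (G 0).re + ∫ θ in Set.Icc 0 (2 * Real.pi),
      (1 / (2 * Real.pi) * (Real.sin θ * (G (r * exp (θ * I))).im)) *
        ((x - c) / (ρ - Real.cos θ * (x - c))) := by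
  have hy : |(x - c) / ρ| < 1 := by rw [abs_div, abs_of_pos hρ, div_lt_one hρ]; exact hx
  have hs := lwSig_abs _ hy
  have hq := lwSig_quad _ hy
  set s := lwSig ((x - c) / ρ) with hs_def
  have hu : DifferentiableOn ℂ (fun z => G (r * z)) (Metric.ball 0 (1 / r)) := by
    apply hG.comp (by fun_prop)
    intro z hz
    simp only [Metric.mem_ball, dist_zero_right] at hz ⊢
    rw [norm_mul, norm_real, Real.norm_eq_abs, abs_of_pos hr]
    rw [lt_div_iff₀ hr] at hz
    linarith
  have h := lw_int_rep (fun z => G (r * z)) (1 / r) (by rw [lt_div_iff₀ hr]; linarith) hu s hs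
  simp only [mul_zero] at h
  have hcont : Continuous (fun θ : ℝ => G (r * exp (θ * I))) := by
    apply hG.continuousOn.comp_continuous (by fun_prop)
    intro θ
    simp only [Metric.mem_ball, dist_zero_right]
    rw [norm_mul, norm_real, Real.norm_eq_abs, abs_of_pos hr, norm_exp_ofReal_mul_I]
    linarith
  have hden : ∀ θ : ℝ, 1 - 2 * s * Real.cos θ + s ^ 2 ≠ 0 := by
    intro θ h0
    have : (s - Real.cos θ) ^ 2 + Real.sin θ ^ 2 = 0 := by
      have := Real.sin_sq_add_cos_sq θ
      linear_combination h0 + this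
    have h1 : s = Real.cos θ := by nlinarith [sq_nonneg (s - Real.cos θ), sq_nonneg (Real.sin θ)]
    have h2 : Real.sin θ ^ 2 = 0 := by nlinarith [sq_nonneg (s - Real.cos θ), sq_nonneg (Real.sin θ)]
    have h3 := Real.sin_sq_add_cos_sq θ
    rw [h2, ← h1] at h3
    nlinarith [sq_abs s, abs_nonneg s]
  have hint : IntervalIntegrable (fun θ : ℝ => G (r * exp (θ * I)) *
      ((-2 * I) * ((Real.sin θ * (s / (1 - 2 * s * Real.cos θ + s ^ 2)) : ℝ) : ℂ)))
      MeasureTheory.volume 0 (2 * Real.pi) := by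
    apply Continuous.intervalIntegrable
    apply hcont.mul
    apply continuous_const.mul
    apply continuous_ofReal.comp
    apply Real.continuous_sin.mul
    exact Continuous.div (by fun_prop) (by fun_prop) hden
  have h5 := congrArg re h
  rw [sub_re, re_ofReal_mul] at h5
  have h6 := reCLM.intervalIntegral_comp_comm hint
  simp only [reCLM_apply] at h6
  rw [← h6] at h5
  rw [MeasureTheory.integral_Icc_eq_integral_Ioc,
    ← intervalIntegral.integral_of_le (by positivity : (0:ℝ) ≤ 2 * Real.pi)]
  rw [← intervalIntegral.integral_const_mul] at h5
  rw [ofReal_mul]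
  rw [← sub_eq_iff_eq_add', h5]
  apply intervalIntegral.integral_congr
  intro θ _
  simp only
  have e1 : (x - c) / (ρ - Real.cos θ * (x - c)) = 2 * (s / (1 - 2 * s * Real.cos θ + s ^ 2)) := by
    have hxc : (x - c) * (1 + s ^ 2) = 2 * s * ρ := by
      rw [hq]; field_simp
    have hd2 : ρ - Real.cos θ * (x - c) ≠ 0 := by
      have h1 : Real.cos θ * (x - c) ≤ |x - c| := by
        calc Real.cos θ * (x - c) ≤ |Real.cos θ * (x - c)| := le_abs_self _
          _ = |Real.cos θ| * |x - c| := abs_mul _ _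
          _ ≤ 1 * |x - c| := by gcongr; exact Real.abs_cos_le_one θ
          _ = _ := one_mul _
      intro h
      linarith
    rw [← mul_div_assoc, div_eq_div_iff hd2 (hden θ)]
    linear_combination hxc
  rw [e1]
  simp only [mul_re, mul_im, neg_re, neg_im, I_re, I_im, ofReal_re, ofReal_im, re_ofNat, im_ofNat]
  ring

theorem lw_dir2 (A B : H →L[ℂ] H) (hA : IsSelfAdjoint A) (hB : IsSelfAdjoint B) (hAB : A ≤ B)
    (c ρ : ℝ) (hρ : 0 < ρ) (hA' : ∀ x ∈ spectrum ℝ A, |x - c| < ρ)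
    (hB' : ∀ x ∈ spectrum ℝ B, |x - c| < ρ) (f : ℝ → ℝ) (G : ℂ → ℂ)
    (hG : DifferentiableOn ℂ G (Metric.ball 0 1))
    (hGf : ∀ s : ℝ, |s| < 1 → G s = f (c + ρ * (2 * s / (1 + s ^ 2))))
    (hGc : ∀ z : ℂ, ‖z‖ < 1 → G (conj z) = conj (G z))
    (hIm : ∀ z : ℂ, ‖z‖ < 1 → 0 < z.im → 0 ≤ (G z).im) : cfc f A ≤ cfc f B := by
  have hsig : ∀ x, |x - c| < ρ → |lwSig ((x - c) / ρ)| < 1 := by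
    intro x hx
    apply lwSig_abs
    rw [abs_div, abs_of_pos hρ, div_lt_one hρ]; exact hx
  set h : ℝ → ℝ → ℝ := fun r x => (G (r * lwSig ((x - c) / ρ) : ℝ)).re with hh
  have hcont : ∀ T : H →L[ℂ] H, (∀ x ∈ spectrum ℝ T, |x - c| < ρ) →
      ContinuousOn (Function.uncurry h) (Set.Icc 0 1 ×ˢ spectrum ℝ T) := by
    intro T hT
    have hc1 : ContinuousOn (fun p : ℝ × ℝ => G ((p.1 * lwSig ((p.2 - c) / ρ) : ℝ) : ℂ))
        (Set.Icc 0 1 ×ˢ spectrum ℝ T) := by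
      apply hG.continuousOn.comp
      · have := lwSig_cont
        fun_prop
      · rintro ⟨r, x⟩ ⟨hr, hx⟩
        simp only [Metric.mem_ball, dist_zero_right, norm_real, Real.norm_eq_abs, abs_mul]
        have := hsig x (hT x hx)
        have h1 : |r| ≤ 1 := by rw [abs_of_nonneg hr.1]; exact hr.2
        nlinarith [abs_nonneg r, abs_nonneg (lwSig ((x - c) / ρ))]
    exact continuous_re.comp_continuousOn hc1
  have hconr : ∀ T : H →L[ℂ] H, (∀ x ∈ spectrum ℝ T, |x - c| < ρ) → ∀ r ∈ Set.Icc (0:ℝ) 1,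
      ContinuousOn (h r) (spectrum ℝ T) := by
    intro T hT r hr
    exact (hcont T hT).comp (f := fun x => (r, x)) (by fun_prop) (fun x hx => ⟨hr, hx⟩)
  have hlim : ∀ T : H →L[ℂ] H, (∀ x ∈ spectrum ℝ T, |x - c| < ρ) →
      Filter.Tendsto (fun r => cfc (h r) T) (nhdsWithin 1 (Set.Ioo 0 1)) (nhds (cfc f T)) := by
    intro T hT
    have e : cfc f T = cfc (h 1) T := by
      apply cfc_congr
      intro x hx
      simp only [hh, one_mul]
      rw [hGf _ (hsig x (hT x hx)), ofReal_re, lwSig_psi]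
      · congr 1; field_simp; ring
      · rw [abs_div, abs_of_pos hρ, div_lt_one hρ]; exact hT x hx
    rw [e]
    apply tendsto_cfc_fun
    · intro u hu
      obtain ⟨v, hv, hv'⟩ := (spectrum.isCompact (𝕜 := ℝ) T).mem_uniformity_of_prod (hcont T hT)
        (q := 1) (by simp) (symm_le_uniformity hu)
      have : v ∈ nhdsWithin 1 (Set.Ioo (0:ℝ) 1) := nhdsWithin_mono _ Set.Ioo_subset_Icc_self hv
      filter_upwards [this] with r hr x hx
      exact hv' r hr x hx
    · filter_upwards [self_mem_nhdsWithin] with r hr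
      exact hconr T hT r (Set.Ioo_subset_Icc_self hr)
  haveI : (nhdsWithin (1:ℝ) (Set.Ioo 0 1)).NeBot := by
    rw [← mem_closure_iff_nhdsWithin_neBot, closure_Ioo (by norm_num)]
    simp
  apply le_of_tendsto_of_tendsto (hlim A hA') (hlim B hB')
  filter_upwards [self_mem_nhdsWithin] with r hr
  set w : ℝ → ℝ := fun θ => 1 / (2 * Real.pi) * (Real.sin θ * (G (r * exp (θ * I))).im) with hw
  have hnorm : ∀ θ : ℝ, ‖(r * exp (θ * I) : ℂ)‖ < 1 := by
    intro θ
    rw [norm_mul, norm_real, Real.norm_eq_abs, abs_of_pos hr.1, norm_exp_ofReal_mul_I]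
    linarith [hr.2]
  have hwc : Continuous w := by
    have h1 : Continuous (fun θ : ℝ => G (r * exp (θ * I))) := by
      apply hG.continuousOn.comp_continuous (by fun_prop)
      intro θ
      simpa using hnorm θ
    have h2 := continuous_im.comp h1
    exact continuous_const.mul (Real.continuous_sin.mul h2)
  have hw0 : ∀ θ, 0 ≤ w θ := by
    intro θ
    have h1 := lw_w_nonneg G hGc hIm _ (hnorm θ)
    have h2 : (r * exp (θ * I) : ℂ).im = r * Real.sin θ := by
      rw [im_ofReal_mul, exp_ofReal_mul_I_im]
    rw [h2, mul_assoc] at h1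
    have h3 := nonneg_of_mul_nonneg_right h1 hr.1
    simp only [hw]
    positivity
  have e : ∀ T : H →L[ℂ] H, IsSelfAdjoint T → (∀ x ∈ spectrum ℝ T, |x - c| < ρ) →
      cfc (h r) T = algebraMap ℝ _ (G 0).re + cfc (fun x : ℝ => ∫ θ in Set.Icc 0 (2 * Real.pi),
        w θ * ((x - c) / (ρ - Real.cos θ * (x - c)))) T := by
    intro T hT hT'
    have h1 : ∀ x ∈ spectrum ℝ T, h r x = (G 0).re + ∫ θ in Set.Icc 0 (2 * Real.pi),
        w θ * ((x - c) / (ρ - Real.cos θ * (x - c))) :=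
      fun x hx => lw_hr G hG c ρ r hρ hr.1 hr.2 x (hT' x hx)
    have h2 : ContinuousOn (fun x : ℝ => ∫ θ in Set.Icc 0 (2 * Real.pi),
        w θ * ((x - c) / (ρ - Real.cos θ * (x - c)))) (spectrum ℝ T) := by
      have : ContinuousOn (fun x => h r x - (G 0).re) (spectrum ℝ T) :=
        (hconr T hT' r (Set.Ioo_subset_Icc_self hr)).sub continuousOn_const
      apply this.congr
      intro x hx
      simp only [h1 x hx]
      ring
    rw [← cfc_const_add _ _ T h2 hT]
    exact cfc_congr h1
  rw [e A hA hA', e B hB hB']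
  exact add_le_add_right (lw_int_mono A B hA hB hAB c ρ hρ hA' hB' w hwc hw0) _

end lwops2
section lwops3
variable {H : Type*} [NormedAddCommGroup H] [InnerProductSpace ℂ H] [CompleteSpace H]

theorem lw_spec (T : H →L[ℂ] H) (hT : IsSelfAdjoint T) (S : Set ℝ) :
    spectrum ℂ T ⊆ (fun x : ℝ => (x : ℂ)) '' S ↔ spectrum ℝ T ⊆ S := by
  have h := hT.spectrumRestricts.algebraMap_image
  rw [← h]
  exact Set.image_subset_image_iff ofReal_injective

end lwops3

section lwcs
variable {𝔸 : Type*} [CStarAlgebra 𝔸] [PartialOrder 𝔸] [StarOrderedRing 𝔸]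

theorem lw_near (D Y : 𝔸) (ε : ℝ) (hD : algebraMap ℝ 𝔸 ε ≤ D) (hY : IsSelfAdjoint Y)
    (h : ‖Y - D‖ ≤ ε) : 0 ≤ Y := by
  have h1 : IsSelfAdjoint (D - algebraMap ℝ 𝔸 ε) := IsSelfAdjoint.of_nonneg (sub_nonneg.2 hD)
  have h2 : IsSelfAdjoint (algebraMap ℝ 𝔸 ε) := IsSelfAdjoint.algebraMap 𝔸 (by simp [IsSelfAdjoint])
  have h3 : IsSelfAdjoint D := by simpa using h1.add h2
  have h4 := (hY.sub h3).neg_algebraMap_norm_le_self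
  have h5 : algebraMap ℝ 𝔸 ‖Y - D‖ ≤ algebraMap ℝ 𝔸 ε := by gcongr
  have h6 : -algebraMap ℝ 𝔸 ε ≤ Y - D := (neg_le_neg h5).trans h4
  have := add_le_add h6 hD
  simpa using this

structure LwRes {ι : Type} [Fintype ι] [DecidableEq ι] (P : ι → 𝔸) : Prop where
  st : ∀ i, star (P i) = P i
  mu : ∀ i j, P i * P j = if i = j then P i else 0
  on : ∑ i, P i = 1

theorem LwRes.mul_sum {ι : Type} [Fintype ι] [DecidableEq ι] {P : ι → 𝔸} (hP : LwRes P)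
    (a b : ι → ℝ) : (∑ i, a i • P i) * (∑ i, b i • P i) = ∑ i, (a i * b i) • P i := by
  rw [Finset.sum_mul]
  apply Finset.sum_congr rfl
  intro i _
  rw [Finset.mul_sum]
  simp only [smul_mul_smul_comm, hP.mu, smul_ite, smul_zero, Finset.sum_ite_eq, Finset.mem_univ, if_true]

noncomputable def LwRes.hom {ι : Type} [Fintype ι] [DecidableEq ι] {P : ι → 𝔸}
    (hP : LwRes P) : (ι → ℝ) →ₐ[ℝ] 𝔸 :=
  AlgHom.ofLinearMap
    { toFun := fun d => ∑ i, d i • P i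
      map_add' := fun a b => by simp [add_smul, Finset.sum_add_distrib]
      map_smul' := fun r a => by simp [Finset.smul_sum, mul_smul] }
    (by simp [hP.on])
    (fun a b => (hP.mul_sum a b).symm)

theorem LwRes.hom_apply {ι : Type} [Fintype ι] [DecidableEq ι] {P : ι → 𝔸}
    (hP : LwRes P) (d : ι → ℝ) : hP.hom d = ∑ i, d i • P i := rfl

theorem LwRes.sa {ι : Type} [Fintype ι] [DecidableEq ι] {P : ι → 𝔸}
    (hP : LwRes P) (d : ι → ℝ) : IsSelfAdjoint (∑ i, d i • P i) := by
  rw [IsSelfAdjoint, star_sum]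
  apply Finset.sum_congr rfl
  intro i _
  rw [star_smul, hP.st]
  simp

theorem LwRes.spec {ι : Type} [Fintype ι] [DecidableEq ι] {P : ι → 𝔸}
    (hP : LwRes P) (d : ι → ℝ) : spectrum ℝ (∑ i, d i • P i) ⊆ Set.range d := by
  rw [← hP.hom_apply]
  refine (AlgHom.spectrum_apply_subset hP.hom d).trans ?_
  rw [Pi.spectrum_eq]
  intro y hy
  simp only [Set.mem_iUnion] at hy
  obtain ⟨i, hi⟩ := hy
  refine ⟨i, ?_⟩
  by_contra hne
  apply hi
  rw [spectrum.mem_resolventSet_iff]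
  apply IsUnit.mk0
  intro h0
  exact hne (sub_eq_zero.1 h0).symm

theorem LwRes.cfc_eq {ι : Type} [Fintype ι] [DecidableEq ι] {P : ι → 𝔸}
    (hP : LwRes P) (d : ι → ℝ) (f : ℝ → ℝ) :
    cfc f (∑ i, d i • P i) = ∑ i, f (d i) • P i := by
  set p := Lagrange.interpolate (Finset.univ.image d) id f with hp
  have hpe : ∀ i, p.eval (d i) = f (d i) := by
    intro i
    have := Lagrange.eval_interpolate_at_node (s := Finset.univ.image d) (v := id) (i := d i) f
      (Function.injective_id.injOn) (by simp)
    exact this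
  have h1 : cfc f (∑ i, d i • P i) = cfc p.eval (∑ i, d i • P i) := by
    apply cfc_congr
    intro y hy
    obtain ⟨i, rfl⟩ := hP.spec d hy
    exact (hpe i).symm
  rw [h1, cfc_polynomial p _ (hP.sa d), ← hP.hom_apply, Polynomial.aeval_algHom_apply, hP.hom_apply]
  apply Finset.sum_congr rfl
  intro i _
  rw [← hpe]
  congr 1
  simp

theorem LwRes.conj {ι : Type} [Fintype ι] [DecidableEq ι] {P : ι → 𝔸}
    (hP : LwRes P) (U V : 𝔸) (hUV : U * V = 1) (hVU : V * U = 1) (hs : star U = V) :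
    LwRes (fun i => U * P i * V) where
  st i := by
    rw [star_mul, star_mul, hP.st, ← hs, star_star, mul_assoc]
  mu i j := by
    have : U * P i * V * (U * P j * V) = U * (P i * P j) * V := by
      calc _ = U * P i * (V * U) * P j * V := by noncomm_ring
        _ = _ := by rw [hVU]; noncomm_ring
    rw [this, hP.mu]
    split_ifs <;> simp
  on := by
    rw [← Finset.sum_mul, ← Finset.mul_sum, hP.on, mul_one, hUV]

theorem lw_key {ι : Type} [Fintype ι] [DecidableEq ι] {P : ι → 𝔸}
    (hP : LwRes P) (X : 𝔸) (hX : star X = -X) (x δ fp : ι → ℝ) (f : ℝ → ℝ) (S : Set ℝ)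
    (hS : IsOpen S) (hx : ∀ i, x i ∈ S) (hfp : ∀ i, HasDerivAt f (fp i) (x i)) (ε : ℝ) (hε : 0 < ε)
    (hD : algebraMap ℝ _ ε ≤ X * (∑ i, x i • P i) - (∑ i, x i • P i) * X + ∑ i, δ i • P i)
    (hmono : ∀ A B : 𝔸, IsSelfAdjoint A → IsSelfAdjoint B → spectrum ℝ A ⊆ S →
      spectrum ℝ B ⊆ S → A ≤ B → cfc f A ≤ cfc f B) :
    0 ≤ X * (∑ i, f (x i) • P i) - (∑ i, f (x i) • P i) * X + ∑ i, (fp i * δ i) • P i := by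
  set U : ℝ → 𝔸 := fun t => NormedSpace.exp (t • X) with hU
  letI : NormedAlgebra ℚ 𝔸 := NormedAlgebra.restrictScalars ℚ ℝ 𝔸
  have hUU : ∀ t, U t * U (-t) = 1 := by
    intro t
    simp only [hU]
    rw [← NormedSpace.exp_add_of_commute, ← add_smul, add_neg_cancel, zero_smul, NormedSpace.exp_zero]
    exact ((Commute.refl X).smul_left t).smul_right (-t)
  have hUs : ∀ t, star (U t) = U (-t) := by
    intro t
    simp only [hU]
    rw [NormedSpace.star_exp, star_smul, hX]
    simp
  have hres : ∀ t, LwRes (fun i => U t * P i * U (-t)) := by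
    intro t
    refine hP.conj _ _ (hUU t) ?_ (hUs t)
    have := hUU (-t)
    rwa [neg_neg] at this
  have hU0 : U 0 = 1 := by simp [hU]
  have hUd : HasDerivAt U X 0 := by
    have := hasDerivAt_exp_smul_const (𝕂 := ℝ) X 0
    simpa using this
  have hUd' : HasDerivAt (fun t => U (-t)) (-X) 0 := by
    have h1 : HasDerivAt U X (-0) := by simpa using hUd
    have := h1.scomp (0:ℝ) (hasDerivAt_neg (0:ℝ))
    rw [neg_one_smul] at this
    exact this
  have hder : ∀ (g : ι → ℝ → ℝ) (g' : ι → ℝ), (∀ i, HasDerivAt (g i) (g' i) 0) →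
      HasDerivAt (fun t => ∑ i, g i t • (U t * P i * U (-t)))
        (X * (∑ i, g i 0 • P i) - (∑ i, g i 0 • P i) * X + ∑ i, g' i • P i) 0 := by
    intro g g' hg
    have h1 : HasDerivAt (fun t => ∑ i, g i t • P i) (∑ i, g' i • P i) 0 := by
      apply HasDerivAt.fun_sum
      intro i _
      exact (hg i).smul_const (P i)
    have h2 := (hUd.fun_mul h1).fun_mul hUd'
    have e : (fun t => ∑ i, g i t • (U t * P i * U (-t))) =
        (fun t => U t * (∑ i, g i t • P i) * U (-t)) := by
      funext t
      rw [Finset.mul_sum, Finset.sum_mul]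
      apply Finset.sum_congr rfl
      intro i _
      simp
    rw [e]
    convert h2 using 1
    simp only [neg_zero, hU0]
    noncomm_ring
  set B : ℝ → 𝔸 := fun t => ∑ i, (x i + t * δ i) • (U t * P i * U (-t)) with hB
  set C : ℝ → 𝔸 := fun t => ∑ i, f (x i + t * δ i) • (U t * P i * U (-t)) with hC
  have hBd := hder (fun i t => x i + t * δ i) δ (by
    intro i
    simpa using ((hasDerivAt_id (0:ℝ)).mul_const (δ i)).const_add (x i))
  have hCd := hder (fun i t => f (x i + t * δ i)) (fun i => fp i * δ i) (by
    intro i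
    have h1 : HasDerivAt (fun t : ℝ => x i + t * δ i) (δ i) 0 := by
      simpa using ((hasDerivAt_id (0:ℝ)).mul_const (δ i)).const_add (x i)
    have h2 : HasDerivAt f (fp i) (x i + 0 * δ i) := by simpa using hfp i
    exact h2.comp (0:ℝ) h1)
  simp only [zero_mul, add_zero] at hBd hCd
  have hC0 : C 0 = cfc f (B 0) := ((hres 0).cfc_eq (fun i => x i + 0 * δ i) f).symm
  have hslB := (hasDerivAt_iff_tendsto_slope.1 hBd).mono_left (nhdsWithin_mono 0 (fun y (hy : y ∈ Set.Ioi (0:ℝ)) => (ne_of_gt hy : y ≠ 0)))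
  have hslC := (hasDerivAt_iff_tendsto_slope.1 hCd).mono_left (nhdsWithin_mono 0 (fun y (hy : y ∈ Set.Ioi (0:ℝ)) => (ne_of_gt hy : y ≠ 0)))
  have hSev : ∀ᶠ t in nhdsWithin (0:ℝ) (Set.Ioi 0), ∀ i, x i + t * δ i ∈ S := by
    rw [Filter.eventually_all]
    intro i
    apply nhdsWithin_le_nhds
    have hc : ContinuousAt (fun t : ℝ => x i + t * δ i) 0 := by fun_prop
    exact hc (hS.mem_nhds (by simpa using hx i))
  have hBev : ∀ᶠ t in nhdsWithin (0:ℝ) (Set.Ioi 0), B 0 ≤ B t := by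
    have h1 := Metric.tendsto_nhds.1 hslB ε hε
    filter_upwards [h1, self_mem_nhdsWithin] with t ht ht0
    have ht0 : 0 < t := ht0
    rw [dist_eq_norm] at ht
    have hsaB : ∀ t, IsSelfAdjoint (B t) := fun t => (hres t).sa _
    have hYsa : IsSelfAdjoint (slope B 0 t) := by
      rw [slope_def_module]
      exact IsSelfAdjoint.smul (by simp [IsSelfAdjoint]) ((hsaB t).sub (hsaB 0))
    have h2 := lw_near _ _ ε hD hYsa ht.le
    rw [slope_def_module, sub_zero] at h2
    have h3 := smul_nonneg ht0.le h2
    rw [smul_smul, mul_inv_cancel₀ ht0.ne', one_smul] at h3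
    exact sub_nonneg.1 h3
  apply ge_of_tendsto hslC
  filter_upwards [hSev, hBev, self_mem_nhdsWithin] with t h1 h2 h3
  have h3 : 0 < t := h3
  have h4 := hmono (B 0) (B t) ((hres 0).sa _) ((hres t).sa _)
    (((hres 0).spec _).trans (by rintro _ ⟨i, rfl⟩; simpa using hx i))
    (((hres t).spec _).trans (by rintro _ ⟨i, rfl⟩; exact h1 i)) h2
  have h5 : cfc f (B t) = C t := (hres t).cfc_eq (fun i => x i + t * δ i) f
  rw [← hC0, h5] at h4
  rw [slope_def_module]
  exact smul_nonneg (by simp [h3.le]) (sub_nonneg.2 h4)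

end lwcs
section lwmu
variable {𝔸 : Type*} [CStarAlgebra 𝔸]

noncomputable def lwP {κ : Type} [Fintype κ] (E : κ → κ → 𝔸) : Option κ → 𝔸 :=
  fun o => o.elim (1 - ∑ k, E k k) (fun i => E i i)

theorem lwP_res {κ : Type} [Fintype κ] [DecidableEq κ] (E : κ → κ → 𝔸)
    (hs : ∀ i j, star (E i j) = E j i) (hm : ∀ i j k l, E i j * E k l = if j = k then E i l else 0) :
    LwRes (lwP E) where
  st o := by
    cases o with
    | none => simp [lwP, hs]
    | some i => simp [lwP, hs]
  mu o p := by
    have h1 : ∀ i j, E i j * ∑ k, E k k = E i j := by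
      intro i j; rw [Finset.mul_sum]; simp [hm]
    have h2 : ∀ i j, (∑ k, E k k) * E i j = E i j := by
      intro i j; rw [Finset.sum_mul]; simp [hm]
    have h3 : (∑ k, E k k) * (∑ k, E k k) = ∑ k, E k k := by
      rw [Finset.sum_mul]; simp [h1]
    cases o with
    | none => cases p with
      | none => simp [lwP, mul_sub, sub_mul, h3]
      | some j => simp [lwP, sub_mul, h2]
    | some i => cases p with
      | none => simp [lwP, mul_sub, h1]
      | some j =>
        simp only [lwP, Option.elim_some, hm, Option.some.injEq]
        split_ifs with h
        · rw [h]
        · rfl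
  on := by simp [lwP, Fintype.sum_option]

theorem lwP_comm {κ : Type} [Fintype κ] [DecidableEq κ] (E : κ → κ → 𝔸)
    (hm : ∀ i j k l, E i j * E k l = if j = k then E i l else 0) (q : κ → κ → ℂ) (d : Option κ → ℝ) :
    (∑ i, ∑ j, q i j • E i j) * (∑ o, d o • lwP E o) - (∑ o, d o • lwP E o) * (∑ i, ∑ j, q i j • E i j)
      = ∑ i, ∑ j, (q i j * (d (some j) - d (some i))) • E i j := by
  have h1 : ∀ i j, E i j * (∑ o, d o • lwP E o) = (d (some j) : ℂ) • E i j := by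
    intro i j
    rw [Fintype.sum_option, mul_add, Finset.mul_sum]
    simp [lwP, mul_sub, Finset.mul_sum, hm]
  have h2 : ∀ i j, (∑ o, d o • lwP E o) * E i j = (d (some i) : ℂ) • E i j := by
    intro i j
    rw [Fintype.sum_option, add_mul, Finset.sum_mul]
    simp [lwP, sub_mul, Finset.sum_mul, hm]
  rw [Finset.sum_mul, Finset.mul_sum, ← Finset.sum_sub_distrib]
  apply Finset.sum_congr rfl
  intro i _
  rw [Finset.sum_mul, Finset.mul_sum, ← Finset.sum_sub_distrib]
  apply Finset.sum_congr rfl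
  intro j _
  rw [smul_mul_assoc, mul_smul_comm, h1, h2, smul_smul, smul_smul, ← sub_smul]
  congr 1
  ring

variable [PartialOrder 𝔸] [StarOrderedRing 𝔸]

noncomputable def lwL {κ : Type} [DecidableEq κ] (f : ℝ → ℝ) (x fp : κ → ℝ) (i j : κ) : ℝ :=
  if i = j then fp i else (f (x i) - f (x j)) / (x i - x j)

theorem lw_munit {κ : Type} [Fintype κ] [DecidableEq κ] (E : κ → κ → 𝔸)
    (hs : ∀ i j, star (E i j) = E j i) (hm : ∀ i j k l, E i j * E k l = if j = k then E i l else 0)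
    (w : κ → ℂ) (hpos : 0 ≤ ∑ i, ∑ j, (w i * conj (w j)) • E i j)
    (x fp : κ → ℝ) (hxi : Function.Injective x) (f : ℝ → ℝ) (S : Set ℝ)
    (hS : IsOpen S) (hx : ∀ i, x i ∈ S) (hfp : ∀ i, HasDerivAt f (fp i) (x i))
    (x0 fp0 : ℝ) (hx0 : x0 ∈ S) (hfp0 : HasDerivAt f fp0 x0) (ε : ℝ) (hε : 0 < ε)
    (hmono : ∀ A B : 𝔸, IsSelfAdjoint A → IsSelfAdjoint B → spectrum ℝ A ⊆ S →
      spectrum ℝ B ⊆ S → A ≤ B → cfc f A ≤ cfc f B) :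
    0 ≤ ∑ i, ∑ j, (w i * conj (w j) * lwL f x fp i j) • E i j
      + ((ε * fp0 : ℝ) • (1 - ∑ k, E k k) + ∑ i, (ε * fp i : ℝ) • E i i) := by
  set q : κ → κ → ℂ := fun i j => if i = j then 0 else w i * conj (w j) / (x j - x i) with hq
  have hne : ∀ i j, i ≠ j → (x j - x i : ℂ) ≠ 0 := by
    intro i j hij h
    rw [sub_eq_zero] at h
    exact hij (hxi (ofReal_injective h)).symm
  have hX : star (∑ i, ∑ j, q i j • E i j) = -∑ i, ∑ j, q i j • E i j := by
    rw [star_sum]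
    simp only [star_sum, star_smul, hs]
    rw [Finset.sum_comm, ← Finset.sum_neg_distrib]
    apply Finset.sum_congr rfl
    intro i _
    rw [← Finset.sum_neg_distrib]
    apply Finset.sum_congr rfl
    intro j _
    rw [← neg_smul]
    congr 1
    simp only [hq]
    by_cases h : i = j
    · simp [h]
    · rw [if_neg h, if_neg (Ne.symm h)]
      have h1 := hne i j h
      have h2 := hne j i (Ne.symm h)
      simp only [star_def, map_div₀, map_mul, conj_conj, map_sub, conj_ofReal]
      field_simp
      ring
  have hdiag : ∀ (u : κ → κ → ℂ), ∑ i, ∑ j, u i j • E i j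
      = ∑ i, ∑ j, (if i = j then 0 else u i j) • E i j + ∑ i, u i i • E i i := by
    intro u
    rw [← Finset.sum_add_distrib]
    apply Finset.sum_congr rfl
    intro i _
    have : u i i • E i i = ∑ j, (if i = j then u i j else 0) • E i j := by simp
    rw [this, ← Finset.sum_add_distrib]
    apply Finset.sum_congr rfl
    intro j _
    rw [← add_smul]
    split_ifs <;> simp
  have key := lw_key (lwP_res E hs hm) (∑ i, ∑ j, q i j • E i j) hX (fun o => o.elim x0 x)
    (fun o => o.elim ε (fun i => ‖w i‖ ^ 2 + ε)) (fun o => o.elim fp0 fp) f S hS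
    (by intro o; cases o; exacts [hx0, hx _]) (by intro o; cases o; exacts [hfp0, hfp _]) ε hε ?_ hmono
  · rw [lwP_comm E hm q] at key
    convert key using 1
    rw [hdiag, add_assoc]
    congr 1
    · apply Finset.sum_congr rfl
      intro i _
      apply Finset.sum_congr rfl
      intro j _
      congr 1
      simp only [hq, lwL, Option.elim_some]
      split_ifs with h
      · simp
      · have h1 := hne i j h
        have h2 := hne j i (Ne.symm h)
        push_cast
        field_simp
        ring
    · rw [Fintype.sum_option]
      simp only [lwP, Option.elim_some, Option.elim_none]
      rw [add_left_comm, ← Finset.sum_add_distrib, mul_comm]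
      congr 1
      apply Finset.sum_congr rfl
      intro i _
      rw [← Complex.coe_smul (ε * fp i), ← Complex.coe_smul (fp i * _), ← add_smul]
      congr 1
      simp only [lwL, if_true]
      rw [mul_conj, normSq_eq_norm_sq]
      push_cast
      ring
  · rw [lwP_comm E hm q, ← sub_nonneg]
    convert hpos using 1
    rw [hdiag (fun i j => w i * conj (w j)), add_sub_assoc]
    congr 1
    · apply Finset.sum_congr rfl
      intro i _
      apply Finset.sum_congr rfl
      intro j _
      congr 1
      simp only [hq, Option.elim_some]
      split_ifs with h
      · simp
      · have h1 := hne i j h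
        field_simp
    · rw [Fintype.sum_option]
      simp only [lwP, Option.elim_some, Option.elim_none]
      rw [smul_sub, Algebra.algebraMap_eq_smul_one, sub_add_eq_add_sub, sub_sub, add_comm (ε • ∑ k, E k k), add_sub_add_left_eq_sub,
        Finset.smul_sum, ← Finset.sum_sub_distrib]
      apply Finset.sum_congr rfl
      intro i _
      rw [← sub_smul, add_sub_cancel_right, ← Complex.coe_smul]
      congr 1
      rw [mul_conj, normSq_eq_norm_sq]

end lwmu

theorem lw_loewner {H : Type*} [NormedAddCommGroup H] [InnerProductSpace ℂ H] [CompleteSpace H]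
    {κ : Type} [Fintype κ] [DecidableEq κ] (e : κ → H) (he : Orthonormal ℂ e) (w : κ → ℂ)
    (x fp : κ → ℝ) (hxi : Function.Injective x) (f : ℝ → ℝ) (S : Set ℝ)
    (hS : IsOpen S) (hx : ∀ i, x i ∈ S) (hfp : ∀ i, HasDerivAt f (fp i) (x i))
    (x0 fp0 : ℝ) (hx0 : x0 ∈ S) (hfp0 : HasDerivAt f fp0 x0)
    (hmono : ∀ A B : H →L[ℂ] H, IsSelfAdjoint A → IsSelfAdjoint B → spectrum ℝ A ⊆ S →
      spectrum ℝ B ⊆ S → A ≤ B → cfc f A ≤ cfc f B) :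
    0 ≤ (∑ i, ∑ j, w i * conj (w j) * lwL f x fp i j).re := by
  set E : κ → κ → (H →L[ℂ] H) := fun i j => InnerProductSpace.rankOne ℂ (e i) (e j) with hE
  have hin : ∀ i j, inner ℂ (e i) (e j) = if i = j then (1:ℂ) else 0 := orthonormal_iff_ite.1 he
  have hs : ∀ i j, star (E i j) = E j i := by
    intro i j
    rw [ContinuousLinearMap.star_eq_adjoint]
    exact InnerProductSpace.adjoint_rankOne _ _
  have hm : ∀ i j k l, E i j * E k l = if j = k then E i l else 0 := by
    intro i j k l
    ext v
    simp only [hE, mul_apply_eq_comp, InnerProductSpace.rankOne_apply, inner_smul_right, hin]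
    split_ifs <;> simp
  have hpos : 0 ≤ ∑ i, ∑ j, (w i * conj (w j)) • E i j := by
    have : ∑ i, ∑ j, (w i * conj (w j)) • E i j =
        InnerProductSpace.rankOne ℂ (∑ i, w i • e i) (∑ i, w i • e i) := by
      ext u
      simp only [hE, sum_apply, smul_apply, InnerProductSpace.rankOne_apply, sum_inner, inner_smul_left]
      rw [Finset.smul_sum]
      apply Finset.sum_congr rfl
      intro i _
      rw [Finset.sum_smul]
      apply Finset.sum_congr rfl
      intro j _
      rw [smul_smul, smul_smul]
      congr 1
      ring
    rw [this, ContinuousLinearMap.nonneg_iff_isPositive]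
    exact InnerProductSpace.isPositive_rankOne_self _
  set v := ∑ i, e i with hv
  have hev : ∀ i, inner ℂ (e i) v = (1:ℂ) := by
    intro i; rw [hv, inner_sum]; simp [hin]
  have hve : ∀ i, inner ℂ v (e i) = (1:ℂ) := by
    intro i; rw [hv, sum_inner]; simp [hin]
  have main : ∀ ε : ℝ, 0 < ε → 0 ≤ (∑ i, ∑ j, w i * conj (w j) * lwL f x fp i j).re + ε * ∑ i, fp i := by
    intro ε hε
    have h := lw_munit E hs hm w hpos x fp hxi f S hS hx hfp x0 fp0 hx0 hfp0 ε hε hmono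
    rw [ContinuousLinearMap.nonneg_iff_isPositive] at h
    have h2 := h.re_inner_nonneg_right v
    have hEv : ∀ i j, E i j v = e i := by
      intro i j; simp [hE, hev]
    have h3 : (∑ k, E k k) v = v := by
      rw [sum_apply]; simp only [hEv]; rfl
    convert h2 using 1
    simp only [add_apply, sum_apply,
      smul_apply, sub_apply, hEv]
    rw [← hv]
    simp only [one_apply_eq_self, sub_self, smul_zero, zero_add, inner_add_right, inner_sum,
      inner_smul_right, hve, mul_one]
    have h4 : ∀ i, inner ℂ v ((ε * fp i : ℝ) • e i) = ((ε * fp i : ℝ) : ℂ) := by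
      intro i
      rw [← Complex.coe_smul, inner_smul_right, hve, mul_one]
    simp only [h4]
    rw [← ofReal_sum, ← Finset.mul_sum]
    simp
  by_contra hneg
  push Not at hneg
  set R := (∑ i, ∑ j, w i * conj (w j) * lwL f x fp i j).re
  set Q := ∑ i, fp i
  have h1 := main (-R / (2 * (1 + |Q|))) (by apply div_pos; linarith; positivity)
  have h2 : -R / (2 * (1 + |Q|)) * Q ≤ -R / 2 := by
    have h3 : -R / (2 * (1 + |Q|)) * Q ≤ -R / (2 * (1 + |Q|)) * (1 + |Q|) := by
      apply mul_le_mul_of_nonneg_left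
      · linarith [le_abs_self Q]
      · apply div_nonneg; linarith; positivity
    have h4 : -R / (2 * (1 + |Q|)) * (1 + |Q|) = -R / 2 := by
      have : 1 + |Q| ≠ 0 := by positivity
      field_simp
    linarith
  linarith

theorem lw_coeff (G : ℂ → ℂ) (hG : DifferentiableOn ℂ G (Metric.ball 0 1)) :
    ∃ b : ℕ → ℂ, ∀ z : ℂ, ‖z‖ < 1 → HasSum (fun n => b n * z ^ n) (G z) := by
  refine ⟨fun n => (n.factorial : ℂ)⁻¹ * iteratedDeriv n G 0, fun z hz => ?_⟩
  have := Complex.hasSum_taylorSeries_on_ball hG (z := z) (by simpa using hz)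
  have e : (fun n : ℕ => (n.factorial : ℂ)⁻¹ * iteratedDeriv n G 0 * z ^ n)
      = fun n : ℕ => ((n.factorial : ℂ)⁻¹ • (z - 0) ^ n • iteratedDeriv n G 0) := by
    funext n
    simp only [sub_zero, smul_eq_mul]
    ring
  rw [e]
  exact this

theorem lw_coeff_bound (G : ℂ → ℂ) (b : ℕ → ℂ)
    (hb : ∀ z : ℂ, ‖z‖ < 1 → HasSum (fun n => b n * z ^ n) (G z)) (s : ℝ) (hs : 0 < s) (hs1 : s < 1) :
    ∃ C, 0 ≤ C ∧ ∀ n, ‖b n‖ ≤ C * (s⁻¹) ^ n := by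
  have h1 := (hb s (by rw [norm_real, Real.norm_eq_abs, abs_of_pos hs]; exact hs1)).summable
  have h2 := h1.tendsto_atTop_zero.norm
  obtain ⟨C, hC⟩ := h2.bddAbove_range
  refine ⟨C, (norm_nonneg _).trans (hC ⟨0, rfl⟩), fun n => ?_⟩
  have := hC ⟨n, rfl⟩
  simp only [norm_mul, norm_pow, norm_real, Real.norm_eq_abs, abs_of_pos hs] at this
  rw [inv_pow, ← div_eq_mul_inv, le_div_iff₀ (by positivity)]
  exact this

def lwT (b m m' : ℕ → ℂ) (p : ℕ × ℕ × ℕ) : ℂ :=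
  b (p.2.1 + p.2.2 + 1) * m (p.2.1 + p.1) * m' (p.2.2 + p.1)

theorem lw_dom (G : ℂ → ℂ) (b : ℕ → ℂ)
    (hb : ∀ z : ℂ, ‖z‖ < 1 → HasSum (fun n => b n * z ^ n) (G z)) (r : ℝ) (hr : 0 < r) (hr1 : r < 1) :
    ∃ B : ℕ × ℕ × ℕ → ℝ, Summable B ∧ ∀ m m' : ℕ → ℂ, (∀ k, ‖m k‖ ≤ r ^ k) → (∀ k, ‖m' k‖ ≤ r ^ k) →
      ∀ p, ‖lwT b m m' p‖ ≤ B p := by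
  obtain ⟨s, hs1, hs2⟩ := exists_between hr1
  have hs0 := hr.trans hs1
  obtain ⟨C, hC0, hC⟩ := lw_coeff_bound G b hb s hs0 hs2
  have hq : r / s < 1 := by rw [div_lt_one hs0]; exact hs1
  have hg1 : Summable (fun n : ℕ => (r / s) ^ n) := summable_geometric_of_lt_one (by positivity) hq
  have hg2 : Summable (fun n : ℕ => (r ^ 2) ^ n) := summable_geometric_of_lt_one (by positivity) (by nlinarith)
  have h1 : Summable (fun p : ℕ × ℕ => (r / s) ^ p.1 * (r / s) ^ p.2) :=
    hg1.mul_of_nonneg hg1 (fun n => by positivity) (fun n => by positivity)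
  have h2 : Summable (fun p : ℕ × ℕ × ℕ => (r ^ 2) ^ p.1 * ((r / s) ^ p.2.1 * (r / s) ^ p.2.2)) :=
    hg2.mul_of_nonneg h1 (fun n => by positivity) (fun n => by positivity)
  refine ⟨_, h2.mul_left (C * s⁻¹), ?_⟩
  rintro m m' hm hm' ⟨j, k, l⟩
  simp only [lwT, norm_mul]
  calc ‖b (k + l + 1)‖ * ‖m (k + j)‖ * ‖m' (l + j)‖
      ≤ (C * (s⁻¹) ^ (k + l + 1)) * r ^ (k + j) * r ^ (l + j) := by
        gcongr
        · exact hC _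
        · exact hm _
        · exact hm' _
    _ = _ := by
        rw [div_pow, div_pow]
        simp only [inv_pow, pow_add, pow_one]
        field_simp
        ring

theorem lw_sum2 (G : ℂ → ℂ) (b : ℕ → ℂ)
    (hb : ∀ z : ℂ, ‖z‖ < 1 → HasSum (fun n => b n * z ^ n) (G z)) (x y : ℂ) (hx : ‖x‖ < 1) (hy : ‖y‖ < 1) :
    Summable (fun p : ℕ × ℕ => b (p.1 + p.2) * x ^ p.1 * y ^ p.2) := by
  obtain ⟨s, hs1, hs2⟩ := exists_between (max_lt hx hy)
  have hs0 : 0 < s := (norm_nonneg x).trans_lt ((le_max_left _ _).trans_lt hs1)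
  have hxs : ‖x‖ < s := (le_max_left _ _).trans_lt hs1
  have hys : ‖y‖ < s := (le_max_right _ _).trans_lt hs1
  obtain ⟨C, hC0, hC⟩ := lw_coeff_bound G b hb s hs0 hs2
  have hg1 : Summable (fun n : ℕ => (‖x‖ / s) ^ n) := summable_geometric_of_lt_one (by positivity) (by rw [div_lt_one hs0]; exact hxs)
  have hg2 : Summable (fun n : ℕ => (‖y‖ / s) ^ n) := summable_geometric_of_lt_one (by positivity) (by rw [div_lt_one hs0]; exact hys)
  have h1 : Summable (fun p : ℕ × ℕ => (‖x‖ / s) ^ p.1 * (‖y‖ / s) ^ p.2) :=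
    hg1.mul_of_nonneg hg2 (fun n => by positivity) (fun n => by positivity)
  refine Summable.of_norm_bounded (h1.mul_left C) ?_
  rintro ⟨k, l⟩
  simp only [norm_mul, norm_pow]
  calc ‖b (k + l)‖ * ‖x‖ ^ k * ‖y‖ ^ l ≤ (C * (s⁻¹) ^ (k + l)) * ‖x‖ ^ k * ‖y‖ ^ l := by
        gcongr
        exact hC _
    _ = _ := by
        rw [div_pow, div_pow]
        simp only [inv_pow, pow_add]
        field_simp

theorem lw_K (G : ℂ → ℂ) (b : ℕ → ℂ)
    (hb : ∀ z : ℂ, ‖z‖ < 1 → HasSum (fun n => b n * z ^ n) (G z)) (x y : ℂ) (hx : ‖x‖ < 1) (hy : ‖y‖ < 1)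
    (hs : Summable (fun p : ℕ × ℕ => b (p.1 + p.2 + 1) * x ^ p.1 * y ^ p.2)) :
    (x - y) * ∑' p : ℕ × ℕ, b (p.1 + p.2 + 1) * x ^ p.1 * y ^ p.2 = G x - G y := by
  have hc := lw_sum2 G b hb x y hx hy
  have hx' := (hb x hx).tsum_eq
  have hy' := (hb y hy).tsum_eq
  have e1 : ∑' p : ℕ × ℕ, b (p.1 + p.2) * x ^ p.1 * y ^ p.2
      = G y + x * ∑' p : ℕ × ℕ, b (p.1 + p.2 + 1) * x ^ p.1 * y ^ p.2 := by
    rw [hc.tsum_prod, hc.prod.tsum_eq_zero_add, hs.tsum_prod, ← tsum_mul_left]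
    congr 1
    · simp [← hy']
    · apply tsum_congr
      intro k
      rw [← tsum_mul_left]
      apply tsum_congr
      intro l
      rw [show k + 1 + l = k + l + 1 by ring]
      ring
  have hc' := hc.prod_symm
  have hs' := hs.prod_symm
  have e2 : ∑' p : ℕ × ℕ, b (p.1 + p.2) * x ^ p.1 * y ^ p.2
      = G x + y * ∑' p : ℕ × ℕ, b (p.1 + p.2 + 1) * x ^ p.1 * y ^ p.2 := by
    rw [← (Equiv.prodComm ℕ ℕ).tsum_eq, ← (Equiv.prodComm ℕ ℕ).tsum_eq (fun p => b (p.1 + p.2 + 1) * x ^ p.1 * y ^ p.2)]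
    simp only [Equiv.prodComm_apply, Prod.fst_swap, Prod.snd_swap] at hc' hs' ⊢
    rw [hc'.tsum_prod, hc'.prod.tsum_eq_zero_add, hs'.tsum_prod, ← tsum_mul_left]
    congr 1
    · simp [← hx']
    · apply tsum_congr
      intro k
      rw [← tsum_mul_left]
      apply tsum_congr
      intro l
      rw [show l + (k + 1) = l + k + 1 by ring]
      ring
  linear_combination e2 - e1

theorem lw_N (G : ℂ → ℂ) (b : ℕ → ℂ)
    (hb : ∀ z : ℂ, ‖z‖ < 1 → HasSum (fun n => b n * z ^ n) (G z)) (x y : ℂ) (hx : ‖x‖ < 1) (hy : ‖y‖ < 1) :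
    (x - y) * (1 - x * y) * ∑' p, lwT b (fun k => x ^ k) (fun k => y ^ k) p = G x - G y := by
  obtain ⟨r, hr1, hr2⟩ := exists_between (max_lt hx hy)
  have hxr : ‖x‖ < r := (le_max_left _ _).trans_lt hr1
  have hyr : ‖y‖ < r := (le_max_right _ _).trans_lt hr1
  have hr0 : 0 < r := (norm_nonneg x).trans_lt hxr
  obtain ⟨B, hB, hB'⟩ := lw_dom G b hb r hr0 hr2
  have hs : Summable (lwT b (fun k => x ^ k) (fun k => y ^ k)) :=
    Summable.of_norm_bounded hB (hB' _ _ (fun k => by rw [norm_pow]; gcongr) (fun k => by rw [norm_pow]; gcongr))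
  have hs2 : Summable (fun p : ℕ × ℕ => b (p.1 + p.2 + 1) * x ^ p.1 * y ^ p.2) := by
    have := hs.prod_factor 0
    simpa [lwT] using this
  have hxy : ‖x * y‖ < 1 := by rw [norm_mul]; nlinarith [norm_nonneg x, norm_nonneg y]
  have e : ∑' p, lwT b (fun k => x ^ k) (fun k => y ^ k) p
      = (1 - x * y)⁻¹ * ∑' p : ℕ × ℕ, b (p.1 + p.2 + 1) * x ^ p.1 * y ^ p.2 := by
    rw [hs.tsum_prod, ← tsum_geometric_of_norm_lt_one hxy, ← tsum_mul_right]
    apply tsum_congr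
    intro j
    rw [← tsum_mul_left]
    apply tsum_congr
    rintro ⟨k, l⟩
    simp only [lwT]
    ring
  have hne : 1 - x * y ≠ 0 := by
    intro h
    rw [← sub_eq_zero.1 h] at hxy
    simp at hxy
  rw [e, mul_assoc, mul_inv_cancel_left₀ hne]
  exact lw_K G b hb x y hx hy hs2

theorem lw_N_diag (G : ℂ → ℂ) (hG : DifferentiableOn ℂ G (Metric.ball 0 1)) (b : ℕ → ℂ)
    (hb : ∀ z : ℂ, ‖z‖ < 1 → HasSum (fun n => b n * z ^ n) (G z)) (x : ℂ) (hx : ‖x‖ < 1) :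
    (1 - x * x) * ∑' p, lwT b (fun k => x ^ k) (fun k => x ^ k) p = deriv G x := by
  obtain ⟨r, hr1, hr2⟩ := exists_between hx
  have hr0 : 0 < r := (norm_nonneg x).trans_lt hr1
  obtain ⟨B, hB, hB'⟩ := lw_dom G b hb r hr0 hr2
  have hd : HasDerivAt G (deriv G x) x :=
    (hG.differentiableAt (Metric.isOpen_ball.mem_nhds (by simpa using hx))).hasDerivAt
  have h1 := hasDerivAt_iff_tendsto_slope.1 hd
  have hev : ∀ᶠ y in nhdsWithin x {x}ᶜ, ‖y‖ < r :=
    nhdsWithin_le_nhds ((continuous_norm.isOpen_preimage _ isOpen_Iio).mem_nhds hr1)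
  have h2 : Filter.Tendsto (fun y => (1 - x * y) * ∑' p, lwT b (fun k => x ^ k) (fun k => y ^ k) p)
      (nhdsWithin x {x}ᶜ) (nhds ((1 - x * x) * ∑' p, lwT b (fun k => x ^ k) (fun k => x ^ k) p)) := by
    apply Filter.Tendsto.mul
    · have : Continuous (fun y => 1 - x * y) := by fun_prop
      exact (this.tendsto x).mono_left nhdsWithin_le_nhds
    · apply tendsto_tsum_of_dominated_convergence hB
      · rintro ⟨j, k, l⟩
        have : Continuous (fun y => lwT b (fun k => x ^ k) (fun k => y ^ k) (j, k, l)) := by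
          unfold lwT; fun_prop
        exact (this.tendsto x).mono_left nhdsWithin_le_nhds
      · filter_upwards [hev] with y hy
        exact hB' _ _ (fun k => by rw [norm_pow]; gcongr) (fun k => by rw [norm_pow]; gcongr)
  refine tendsto_nhds_unique (h2.congr' ?_) h1
  filter_upwards [hev, self_mem_nhdsWithin] with y hy hne
  have hne : y - x ≠ 0 := sub_ne_zero.2 hne
  have := lw_N G b hb x y hx (hy.trans hr2)
  rw [slope_def_field, eq_div_iff hne]
  linear_combination - this

theorem lw_nodes (z : ℂ) (hz0 : 0 < ‖z‖) (hz1 : ‖z‖ < 1) (n : ℕ) :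
    ∃ (ξ : Fin (n+1) → ℝ) (c : Fin (n+1) → ℂ), Function.Injective ξ ∧ (∀ i, |ξ i| < 1) ∧
      (∀ k ≤ n, ∑ i, c i * (ξ i : ℂ) ^ k = z ^ k) ∧
      (∀ k, ‖∑ i, c i * (ξ i : ℂ) ^ k‖ ≤ ‖z‖ ^ k) := by
  set r := ‖z‖ with hr
  set D : ℝ := ((n:ℝ)+1) * 2 ^ n * ((n:ℝ)+1) ^ (n+1) with hD
  have hn1 : (1:ℝ) ≤ (n:ℝ) + 1 := by linarith [Nat.cast_nonneg (α := ℝ) n]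
  have hD1 : (n:ℝ) + 1 ≤ D := by
    have h1 : (1:ℝ) ≤ 2 ^ n := one_le_pow₀ (by norm_num)
    have h2 : (1:ℝ) ≤ ((n:ℝ)+1) ^ (n+1) := one_le_pow₀ hn1
    have h3 : (1:ℝ) ≤ 2 ^ n * ((n:ℝ)+1) ^ (n+1) := one_le_mul_of_one_le_of_one_le h1 h2
    rw [hD, mul_assoc]
    exact le_mul_of_one_le_right (by linarith) h3
  have hD0 : 0 < D := by linarith
  set h : ℝ := r ^ (n+1) / D with hh
  have hh0 : 0 < h := by positivity
  have hDh : D * h = r ^ (n+1) := by rw [hh]; field_simp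
  set q : ℝ := ((n:ℝ)+1) * h with hq
  have hqr : q ≤ r := by
    calc q ≤ D * h := by rw [hq]; gcongr
      _ = r ^ (n+1) := hDh
      _ ≤ r := pow_le_of_le_one hz0.le hz1.le (by omega)
  have hq0 : 0 < q := by positivity
  set ξ : Fin (n+1) → ℝ := fun i => h * (i : ℕ) with hξ
  have hξq : ∀ i, |ξ i| ≤ q := by
    intro i
    rw [abs_of_nonneg (by simp only [hξ]; positivity)]
    have : ((i:ℕ):ℝ) ≤ n + 1 := by exact_mod_cast i.2.le
    simp only [hξ, hq]
    nlinarith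
  have hξd : ∀ i j, i ≠ j → h ≤ |ξ i - ξ j| := by
    intro i j hij
    have : (1:ℝ) ≤ |((i:ℕ):ℝ) - ((j:ℕ):ℝ)| := by
      have h1 : ((i:ℕ):ℤ) - ((j:ℕ):ℤ) ≠ 0 := by
        intro h0
        exact hij (Fin.ext (by omega))
      have := Int.one_le_abs h1
      exact_mod_cast this
    have e : ξ i - ξ j = h * (((i:ℕ):ℝ) - ((j:ℕ):ℝ)) := by simp only [hξ]; ring
    rw [e, abs_mul, abs_of_pos hh0]
    nlinarith
  have hξi : Function.Injective ξ := by
    intro i j hij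
    by_contra hne
    have := hξd i j hne
    rw [hij, sub_self, abs_zero] at this
    linarith
  set v : Fin (n+1) → ℂ := fun i => (ξ i : ℂ) with hv
  have hvi : Set.InjOn v (Finset.univ : Finset (Fin (n+1))) := by
    intro i _ j _ hij
    exact hξi (ofReal_injective hij)
  set c : Fin (n+1) → ℂ := fun i => (Lagrange.basis Finset.univ v i).eval z with hc
  have hcb : ∀ i, ‖c i‖ ≤ (2 / h) ^ n := by
    intro i
    simp only [hc, Lagrange.basis, Polynomial.eval_prod, norm_prod]
    calc ∏ j ∈ Finset.univ.erase i, ‖Polynomial.eval z (Lagrange.basisDivisor (v i) (v j))‖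
        ≤ ∏ j ∈ Finset.univ.erase i, (2 / h) := by
          apply Finset.prod_le_prod (fun _ _ => norm_nonneg _)
          intro j hj
          have hne : i ≠ j := fun h => (Finset.mem_erase.1 hj).1 h.symm
          have hd := hξd i j hne
          simp only [Lagrange.basisDivisor, Polynomial.eval_mul, Polynomial.eval_C,
            Polynomial.eval_sub, Polynomial.eval_X, norm_mul, norm_inv]
          have e1 : ‖v i - v j‖ = |ξ i - ξ j| := by
            simp only [hv]
            rw [← ofReal_sub, norm_real, Real.norm_eq_abs]
          have e2 : ‖z - v j‖ ≤ 2 := by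
            calc ‖z - v j‖ ≤ ‖z‖ + ‖v j‖ := norm_sub_le _ _
              _ ≤ 1 + 1 := by
                apply add_le_add hz1.le
                simp only [hv, norm_real, Real.norm_eq_abs]
                exact (hξq j).trans (hqr.trans hz1.le)
              _ = 2 := by norm_num
          rw [e1, inv_mul_eq_div]
          gcongr
      _ = (2 / h) ^ n := by
          rw [Finset.prod_const, Finset.card_erase_of_mem (Finset.mem_univ _)]
          simp
  have hex : ∀ k ≤ n, ∑ i, c i * (ξ i : ℂ) ^ k = z ^ k := by
    intro k hk
    have h1 := Lagrange.eq_interpolate (f := (Polynomial.X : Polynomial ℂ) ^ k) hvi (by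
      rw [Polynomial.degree_X_pow, Finset.card_univ, Fintype.card_fin]
      exact_mod_cast Nat.lt_succ_of_le hk)
    have h2 := congrArg (Polynomial.eval z) h1
    rw [Lagrange.interpolate_apply, Polynomial.eval_finsetSum] at h2
    simp only [Polynomial.eval_pow, Polynomial.eval_X, Polynomial.eval_mul, Polynomial.eval_C] at h2
    rw [h2]
    exact Finset.sum_congr rfl fun i _ => mul_comm _ _
  refine ⟨ξ, c, hξi, fun i => (hξq i).trans_lt (hqr.trans_lt hz1), hex, fun k => ?_⟩
  rcases le_or_gt k n with hk | hk
  · rw [hex k hk, norm_pow]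
  obtain ⟨l, rfl⟩ := Nat.exists_eq_add_of_le (Nat.succ_le_of_lt hk)
  calc ‖∑ i, c i * (ξ i : ℂ) ^ (n.succ + l)‖
      ≤ ∑ i, ‖c i * (ξ i : ℂ) ^ (n.succ + l)‖ := norm_sum_le _ _
    _ ≤ ∑ i : Fin (n+1), (2 / h) ^ n * (q ^ (n+1) * r ^ l) := by
        apply Finset.sum_le_sum
        intro i _
        rw [norm_mul, norm_pow, norm_real, Real.norm_eq_abs, pow_add]
        have h1 := hξq i
        have h2 := h1.trans hqr
        have h3 := hcb i
        have h0 := abs_nonneg (ξ i)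
        gcongr
    _ = (((n:ℝ)+1) * (2 / h) ^ n * q ^ (n+1)) * r ^ l := by
        rw [Finset.sum_const, Finset.card_univ, Fintype.card_fin, nsmul_eq_mul]
        push_cast
        ring
    _ = D * h * r ^ l := by
        congr 1
        rw [hD, hq, div_pow, mul_pow]
        field_simp
        ring
    _ = r ^ (n.succ + l) := by rw [hDh, ← pow_add]

theorem lw_exists_orthonormal {H : Type*} [NormedAddCommGroup H] [InnerProductSpace ℂ H]
    (hinf : ¬ FiniteDimensional ℂ H) (n : ℕ) : ∃ e : Fin n → H, Orthonormal ℂ e := by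
  have h1 : (n : Cardinal) ≤ Module.rank ℂ H := by
    have : ¬ Module.rank ℂ H < Cardinal.aleph0 := fun h => hinf (Module.rank_lt_aleph0_iff.1 h)
    exact (Cardinal.natCast_lt_aleph0).le.trans (not_lt.1 this)
  obtain ⟨s, hs⟩ := exists_linearIndependent_of_le_rank h1
  exact ⟨_, InnerProductSpace.gramSchmidtNormed_orthonormal hs⟩

theorem lw_pos_of_psd (G : ℂ → ℂ) (b : ℕ → ℂ)
    (hb : ∀ z : ℂ, ‖z‖ < 1 → HasSum (fun n => b n * z ^ n) (G z))
    (hGc : ∀ z : ℂ, ‖z‖ < 1 → G (conj z) = conj (G z))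
    (hpsd : ∀ (n : ℕ) (ξ : Fin (n+1) → ℝ) (c : Fin (n+1) → ℂ), Function.Injective ξ → (∀ i, |ξ i| < 1) →
      0 ≤ (∑ i, ∑ j, c i * conj (c j) *
        ∑' p, lwT b (fun k => (ξ i : ℂ) ^ k) (fun k => (ξ j : ℂ) ^ k) p).re)
    (z : ℂ) (hz1 : ‖z‖ < 1) (hz : 0 < z.im) : 0 ≤ (G z).im := by
  have hz0 : 0 < ‖z‖ := norm_pos_iff.2 (fun h => by rw [h] at hz; simp at hz)
  obtain ⟨B, hBs, hB⟩ := lw_dom G b hb ‖z‖ hz0 hz1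
  choose ξ c hξi hξ1 hex hbd using lw_nodes z hz0 hz1
  set m : ℕ → ℕ → ℂ := fun n k => ∑ i, c n i * (ξ n i : ℂ) ^ k with hm
  have hsum : ∀ x y : ℝ, |x| < 1 → |y| < 1 →
      Summable (lwT b (fun k => (x : ℂ) ^ k) (fun k => (y : ℂ) ^ k)) := by
    intro x y hx hy
    obtain ⟨r, hr, hr1⟩ := exists_between (max_lt hx hy)
    have hr0 : 0 < r := (abs_nonneg x).trans_lt ((le_max_left _ _).trans_lt hr)
    obtain ⟨B', hBs', hB'⟩ := lw_dom G b hb r hr0 hr1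
    refine Summable.of_norm_bounded hBs' (hB' _ _ ?_ ?_)
    · intro k
      rw [norm_pow, norm_real, Real.norm_eq_abs]
      exact pow_le_pow_left₀ (abs_nonneg _) ((le_max_left _ _).trans hr.le) _
    · intro k
      rw [norm_pow, norm_real, Real.norm_eq_abs]
      exact pow_le_pow_left₀ (abs_nonneg _) ((le_max_right _ _).trans hr.le) _
  have hswap : ∀ n, ∑' p, lwT b (m n) (fun k => conj (m n k)) p = ∑ i, ∑ j, c n i * conj (c n j) *
        ∑' p, lwT b (fun k => (ξ n i : ℂ) ^ k) (fun k => (ξ n j : ℂ) ^ k) p := by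
    intro n
    have e : ∀ p, lwT b (m n) (fun k => conj (m n k)) p = ∑ i, ∑ j, c n i * conj (c n j) *
        lwT b (fun k => (ξ n i : ℂ) ^ k) (fun k => (ξ n j : ℂ) ^ k) p := by
      intro p
      simp only [lwT, hm, map_sum, map_mul, map_pow, conj_ofReal]
      rw [mul_assoc, Finset.sum_mul_sum, Finset.mul_sum]
      simp only [Finset.mul_sum]
      refine Finset.sum_congr rfl fun i _ => Finset.sum_congr rfl fun j _ => ?_
      ring
    have hs2 : ∀ i j, Summable (fun p => c n i * conj (c n j) *
        lwT b (fun k => (ξ n i : ℂ) ^ k) (fun k => (ξ n j : ℂ) ^ k) p) := fun i j =>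
      (hsum _ _ (hξ1 n i) (hξ1 n j)).mul_left _
    rw [tsum_congr e, Summable.tsum_finsetSum (fun i _ => summable_sum (fun j _ => hs2 i j))]
    refine Finset.sum_congr rfl fun i _ => ?_
    rw [Summable.tsum_finsetSum (fun j _ => hs2 i j)]
    refine Finset.sum_congr rfl fun j _ => ?_
    rw [tsum_mul_left]
  have hlim : Filter.Tendsto (fun n => ∑' p, lwT b (m n) (fun k => conj (m n k)) p) Filter.atTop
      (nhds (∑' p, lwT b (fun k => z ^ k) (fun k => (conj z) ^ k) p)) := by
    refine tendsto_tsum_of_dominated_convergence hBs ?_ ?_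
    · intro p
      apply tendsto_const_nhds.congr'
      filter_upwards [Filter.eventually_ge_atTop (p.2.1 + p.1 + (p.2.2 + p.1))] with n hn
      simp only [lwT]
      have h1 : m n (p.2.1 + p.1) = z ^ (p.2.1 + p.1) := hex n _ (by omega)
      have h2 : m n (p.2.2 + p.1) = z ^ (p.2.2 + p.1) := hex n _ (by omega)
      rw [h1, h2, map_pow]
    · refine Filter.Eventually.of_forall fun n p => hB _ _ (hbd n) ?_ p
      intro k
      rw [RCLike.norm_conj]
      exact hbd n k
  have hre : 0 ≤ (∑' p, lwT b (fun k => z ^ k) (fun k => (conj z) ^ k) p).re := by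
    refine ge_of_tendsto ((Complex.continuous_re.tendsto _).comp hlim) ?_
    refine Filter.Eventually.of_forall fun n => ?_
    simp only [Function.comp]
    rw [hswap n]
    exact hpsd n (ξ n) (c n) (hξi n) (hξ1 n)
  have hN := lw_N G b hb z (conj z) hz1 (by rw [RCLike.norm_conj]; exact hz1)
  rw [hGc z hz1] at hN
  set N := ∑' p, lwT b (fun k => z ^ k) (fun k => (conj z) ^ k) p with hNdef
  have h1 : (z - conj z) * (1 - z * conj z) = ((2 * z.im * (1 - ‖z‖ ^ 2) : ℝ) : ℂ) * I := by
    rw [Complex.mul_conj, Complex.sub_conj, Complex.normSq_eq_norm_sq]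
    push_cast
    ring
  rw [h1, Complex.sub_conj] at hN
  have h2 := congrArg Complex.im hN
  rw [mul_assoc, Complex.im_ofReal_mul, Complex.I_mul_im] at h2
  simp at h2
  have h3 : 0 ≤ 2 * z.im * (1 - ‖z‖ ^ 2) * N.re := by
    have : 0 ≤ 1 - ‖z‖ ^ 2 := by nlinarith
    positivity
  linarith

theorem lw_fderiv (f : ℝ → ℝ) (G : ℂ → ℂ) (hG : DifferentiableOn ℂ G (Metric.ball 0 1)) (c ρ : ℝ) (hρ : 0 < ρ)
    (hGf : ∀ s : ℝ, |s| < 1 → G s = f (c + ρ * (2 * s / (1 + s ^ 2)))) (s : ℝ) (hs : |s| < 1) :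
    ∃ d, HasDerivAt f d (c + ρ * (2 * s / (1 + s ^ 2))) ∧
      deriv G s = ((d * (ρ * (2 * (1 - s ^ 2) / (1 + s ^ 2) ^ 2)) : ℝ) : ℂ) := by
  have hsb : ∀ t : ℝ, |t| < 1 → (t : ℂ) ∈ Metric.ball (0:ℂ) 1 := by
    intro t ht
    simpa [norm_real] using ht
  have hGd : ∀ t : ℝ, |t| < 1 → HasDerivAt G (deriv G t) t := fun t ht =>
    ((hG t (hsb t ht)).differentiableAt (Metric.isOpen_ball.mem_nhds (hsb t ht))).hasDerivAt
  set y : ℝ := 2 * s / (1 + s ^ 2) with hy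
  have hy1 : |y| < 1 := lw_psi_re_lt s hs
  set x : ℝ := c + ρ * y with hx
  have hσ : ∀ t : ℝ, |t| < 1 → lwSig (2 * t / (1 + t ^ 2)) = t := by
    intro t ht
    have h1 : 1 - (2 * t / (1 + t ^ 2)) ^ 2 = ((1 - t ^ 2) / (1 + t ^ 2)) ^ 2 := by
      field_simp
      ring
    have ht2 : t ^ 2 < 1 := by rw [← sq_abs]; nlinarith [abs_nonneg t]
    have h2 : Real.sqrt (1 - (2 * t / (1 + t ^ 2)) ^ 2) = (1 - t ^ 2) / (1 + t ^ 2) := by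
      rw [h1, Real.sqrt_sq]
      apply div_nonneg <;> nlinarith
    unfold lwSig
    rw [h2]
    field_simp
    ring
  have hyx : (x - c) / ρ = y := by rw [hx]; field_simp; ring
  have hσd : DifferentiableAt ℝ (fun u : ℝ => lwSig ((u - c) / ρ)) x := by
    unfold lwSig
    have h1 : 1 - ((x - c) / ρ) ^ 2 ≠ 0 := by
      rw [hyx]
      have : y ^ 2 < 1 := by rw [← sq_abs]; nlinarith [abs_nonneg y]
      linarith
    have h2 : 1 + Real.sqrt (1 - ((x - c) / ρ) ^ 2) ≠ 0 := by positivity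
    have h3 : DifferentiableAt ℝ (fun u : ℝ => Real.sqrt (1 - ((u - c) / ρ) ^ 2)) x :=
      DifferentiableAt.sqrt (by fun_prop) h1
    exact DifferentiableAt.div (by fun_prop) (by fun_prop) h2
  have hev : ∀ᶠ u in nhds x, |(u - c) / ρ| < 1 := by
    have : Continuous (fun u : ℝ => |(u - c) / ρ|) := by fun_prop
    refine this.continuousAt.eventually_lt continuousAt_const ?_
    rw [hyx]; exact hy1
  have hfe : f =ᶠ[nhds x] fun u => (G (lwSig ((u - c) / ρ))).re := by
    filter_upwards [hev] with u hu
    rw [hGf _ (lwSig_abs _ hu), ofReal_re, lwSig_psi _ hu]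
    congr 1
    field_simp
    ring
  have hGr : HasDerivAt (fun t : ℝ => (G t).re) (deriv G s).re s := (hGd s hs).real_of_complex
  have hfd : DifferentiableAt ℝ f x := by
    refine DifferentiableAt.congr_of_eventuallyEq ?_ hfe
    have h1 : DifferentiableAt ℝ (fun t : ℝ => (G t).re) (lwSig ((x - c) / ρ)) := by
      rw [hyx, hσ s hs]
      exact hGr.differentiableAt
    exact DifferentiableAt.comp (g := fun t : ℝ => (G t).re) x h1 hσd
  refine ⟨deriv f x, hfd.hasDerivAt, ?_⟩
  have hψ : HasDerivAt (fun t : ℝ => c + ρ * (2 * t / (1 + t ^ 2)))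
      (ρ * (2 * (1 - s ^ 2) / (1 + s ^ 2) ^ 2)) s := by
    have h0 : (1 + s ^ 2) ≠ 0 := by positivity
    have := (((hasDerivAt_id s).const_mul 2).div (((hasDerivAt_id s).pow 2).const_add 1) h0).const_mul ρ |>.const_add c
    refine this.congr_deriv ?_
    simp only [id, Pi.pow_apply]
    field_simp
    push_cast
    ring
  have h1 : HasDerivAt (fun t : ℝ => f (c + ρ * (2 * t / (1 + t ^ 2)))) _ s :=
    HasDerivAt.comp s (h₂ := f) hfd.hasDerivAt hψ
  have h2 := h1.ofReal_comp
  have h3 := (hGd s hs).comp_ofReal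
  have hev2 : (fun t : ℝ => G t) =ᶠ[nhds s] fun t : ℝ => ((f (c + ρ * (2 * t / (1 + t ^ 2))) : ℝ) : ℂ) := by
    have : ∀ᶠ t in nhds s, |t| < 1 := continuous_abs.continuousAt.eventually_lt continuousAt_const hs
    filter_upwards [this] with t ht
    exact hGf t ht
  exact h3.unique (h2.congr_of_eventuallyEq hev2)

theorem lw_psd {H : Type*} [NormedAddCommGroup H] [InnerProductSpace ℂ H] [CompleteSpace H]
    (hinf : ¬ FiniteDimensional ℂ H)
    (f : ℝ → ℝ) (S : Set ℝ) (hS : IsOpen S) (G : ℂ → ℂ) (hG : DifferentiableOn ℂ G (Metric.ball 0 1))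
    (b : ℕ → ℂ) (hb : ∀ z : ℂ, ‖z‖ < 1 → HasSum (fun n => b n * z ^ n) (G z)) (c ρ : ℝ) (hρ : 0 < ρ)
    (hsub : ∀ x, |x - c| < ρ → x ∈ S)
    (hGf : ∀ s : ℝ, |s| < 1 → G s = f (c + ρ * (2 * s / (1 + s ^ 2))))
    (hmono : ∀ A B : H →L[ℂ] H, IsSelfAdjoint A → IsSelfAdjoint B → spectrum ℝ A ⊆ S →
      spectrum ℝ B ⊆ S → A ≤ B → cfc f A ≤ cfc f B)
    (n : ℕ) (ξ : Fin (n+1) → ℝ) (w : Fin (n+1) → ℂ) (hξ : Function.Injective ξ) (hξ1 : ∀ i, |ξ i| < 1) :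
      0 ≤ (∑ i, ∑ j, w i * conj (w j) *
        ∑' p, lwT b (fun k => (ξ i : ℂ) ^ k) (fun k => (ξ j : ℂ) ^ k) p).re := by
  obtain ⟨e, he⟩ := lw_exists_orthonormal hinf (n+1)
  have hd := fun i => lw_fderiv f G hG c ρ hρ hGf (ξ i) (hξ1 i)
  choose fp hfp hfpG using hd
  obtain ⟨d0, hd0, -⟩ := lw_fderiv f G hG c ρ hρ hGf 0 (by simp)
  set x : Fin (n+1) → ℝ := fun i => c + ρ * (2 * ξ i / (1 + ξ i ^ 2)) with hx
  have hmem : ∀ s : ℝ, |s| < 1 → c + ρ * (2 * s / (1 + s ^ 2)) ∈ S := by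
    intro s hs
    apply hsub
    have := lw_psi_re_lt s hs
    rw [add_sub_cancel_left, abs_mul, abs_of_pos hρ]
    nlinarith
  have hprod : ∀ i j, 0 < 1 - ξ i * ξ j := by
    intro i j
    have h1 := hξ1 i
    have h2 := hξ1 j
    have : |ξ i * ξ j| < 1 := by
      rw [abs_mul]
      nlinarith [abs_nonneg (ξ i), abs_nonneg (ξ j)]
    linarith [le_abs_self (ξ i * ξ j)]
  have hxd : ∀ i j, x i - x j = 2 * ρ * (ξ i - ξ j) * (1 - ξ i * ξ j) / ((1 + ξ i ^ 2) * (1 + ξ j ^ 2)) := by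
    intro i j
    simp only [hx]
    field_simp
    ring
  have hxi : Function.Injective x := by
    intro i j hij
    have h1 := hxd i j
    rw [hij, sub_self, eq_comm, div_eq_zero_iff] at h1
    have h2 := (hprod i j).ne'
    have h3 : (1 + ξ i ^ 2) * (1 + ξ j ^ 2) ≠ 0 := by positivity
    have h4 : ξ i - ξ j = 0 := by
      rcases h1 with h1 | h1
      · simpa [hρ.ne', h2] using h1
      · exact absurd h1 h3
    exact hξ (by linarith)
  have hN : ∀ i j, ∑' p, lwT b (fun k => (ξ i : ℂ) ^ k) (fun k => (ξ j : ℂ) ^ k) p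
      = ((2 * ρ / ((1 + ξ i ^ 2) * (1 + ξ j ^ 2)) * lwL f x fp i j : ℝ) : ℂ) := by
    intro i j
    have hn : ∀ i, ‖(ξ i : ℂ)‖ < 1 := fun i => by rw [norm_real]; exact hξ1 i
    by_cases hij : i = j
    · subst hij
      have h1 := lw_N_diag G hG b hb (ξ i) (hn i)
      rw [hfpG i] at h1
      have h2 : ((1 - ξ i * ξ i : ℝ) : ℂ) ≠ 0 := by exact_mod_cast (hprod i i).ne'
      apply mul_left_cancel₀ h2
      have h3 : ((1 - ξ i * ξ i : ℝ) : ℂ) = 1 - (ξ i : ℂ) * ξ i := by push_cast; rfl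
      rw [h3, h1, ← h3, ← ofReal_mul, lwL, if_pos rfl]
      congr 1
      field_simp
    · have h1 := lw_N G b hb (ξ i) (ξ j) (hn i) (hn j)
      rw [hGf _ (hξ1 i), hGf _ (hξ1 j)] at h1
      have hne : ξ i - ξ j ≠ 0 := fun h => hij (hξ (by linarith))
      have h4 : (ξ i - ξ j) * (1 - ξ i * ξ j) ≠ 0 := mul_ne_zero hne (hprod i j).ne'
      have h2 : (((ξ i - ξ j) * (1 - ξ i * ξ j) : ℝ) : ℂ) ≠ 0 := by exact_mod_cast h4
      apply mul_left_cancel₀ h2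
      have h3 : (((ξ i - ξ j) * (1 - ξ i * ξ j) : ℝ) : ℂ) = ((ξ i : ℂ) - ξ j) * (1 - (ξ i : ℂ) * ξ j) := by
        push_cast; rfl
      rw [h3, h1, ← h3, ← ofReal_mul, ← ofReal_sub, lwL, if_neg hij, hxd]
      congr 1
      have h5 := (hprod i j).ne'
      simp only [hx]
      field_simp
  have key := lw_loewner e he (fun i => w i * ((1 + ξ i ^ 2)⁻¹ : ℝ)) x fp hxi f S hS
    (fun i => hmem _ (hξ1 i)) hfp _ d0 (hmem 0 (by simp)) hd0 hmono
  have e1 : (∑ i, ∑ j, w i * conj (w j) *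
        ∑' p, lwT b (fun k => (ξ i : ℂ) ^ k) (fun k => (ξ j : ℂ) ^ k) p)
      = ((2 * ρ : ℝ) : ℂ) * ∑ i, ∑ j, (w i * ((1 + ξ i ^ 2)⁻¹ : ℝ)) * conj (w j * ((1 + ξ j ^ 2)⁻¹ : ℝ))
        * lwL f x fp i j := by
    simp only [Finset.mul_sum]
    refine Finset.sum_congr rfl fun i _ => Finset.sum_congr rfl fun j _ => ?_
    rw [hN, map_mul, conj_ofReal, ofReal_mul, ofReal_div, ofReal_mul (1 + ξ i ^ 2), ofReal_inv, ofReal_inv, div_eq_mul_inv, mul_inv]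
    ring
  rw [e1, re_ofReal_mul]
  exact mul_nonneg (by positivity) key

theorem lw_fwd {H : Type*} [NormedAddCommGroup H] [InnerProductSpace ℂ H] [CompleteSpace H]
    (hinf : ¬ FiniteDimensional ℂ H) (f : ℝ → ℝ) (F : ℂ → ℂ) (S : Set ℝ) (hS : IsOpen S) (hSne : S.Nonempty)
    (hFcont : ContinuousOn F ({z : ℂ | 0 < z.im} ∪ ((fun x : ℝ => (x : ℂ)) '' S)))
    (hFan : DifferentiableOn ℂ F {z : ℂ | 0 < z.im})
    (hFf : ∀ x ∈ S, F (x : ℂ) = ((f x : ℝ) : ℂ))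
    (hmono : ∀ A B : H →L[ℂ] H, IsSelfAdjoint A → IsSelfAdjoint B → spectrum ℝ A ⊆ S →
      spectrum ℝ B ⊆ S → A ≤ B → cfc f A ≤ cfc f B) (w : ℂ) (hw : 0 < w.im) : 0 ≤ (F w).im := by
  obtain ⟨c, hc⟩ := hSne
  obtain ⟨ρ, hρ, hb⟩ := Metric.isOpen_iff.1 hS c hc
  have hsub : ∀ x, |x - c| < ρ → x ∈ S := fun x hx => hb (by rwa [Metric.mem_ball, Real.dist_eq])
  obtain ⟨G, hG, hGF, hGf, hGc⟩ := lw_exists_G S f F hFcont hFan hFf c ρ hρ hsub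
  obtain ⟨b, hb⟩ := lw_coeff G hG
  have hw' : 0 < ((w - c) / (ρ : ℂ)).im := by
    rw [div_ofReal_im]
    simpa using div_pos hw hρ
  obtain ⟨z, hz1, hz, hzw⟩ := lw_psi_surj _ hw'
  have h1 := lw_pos_of_psd G b hb hGc
    (lw_psd hinf f S hS G hG b hb c ρ hρ hsub hGf hmono) z hz1 hz
  rw [hGF z hz1 hz, hzw] at h1
  have e : (c : ℂ) + ρ * ((w - c) / ρ) = w := by
    have : (ρ : ℂ) ≠ 0 := by exact_mod_cast hρ.ne'
    field_simp
    ring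
  rwa [e] at h1

theorem lw_bwd {H : Type*} [NormedAddCommGroup H] [InnerProductSpace ℂ H] [CompleteSpace H]
    [Nontrivial H] (f : ℝ → ℝ) (F : ℂ → ℂ) (S : Set ℝ) (hS : IsOpen S) (hSo : S.OrdConnected)
    (hFcont : ContinuousOn F ({z : ℂ | 0 < z.im} ∪ ((fun x : ℝ => (x : ℂ)) '' S)))
    (hFan : DifferentiableOn ℂ F {z : ℂ | 0 < z.im})
    (hFf : ∀ x ∈ S, F (x : ℂ) = ((f x : ℝ) : ℂ))
    (hIm : ∀ z : ℂ, 0 < z.im → 0 ≤ (F z).im)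
    (A B : H →L[ℂ] H) (hA : IsSelfAdjoint A) (hB : IsSelfAdjoint B) (hAS : spectrum ℝ A ⊆ S)
    (hBS : spectrum ℝ B ⊆ S) (hAB : A ≤ B) : cfc f A ≤ cfc f B := by
  set K := spectrum ℝ A ∪ spectrum ℝ B with hK
  have hKc : IsCompact K := (spectrum.isCompact A).union (spectrum.isCompact B)
  have hKS : K ⊆ S := Set.union_subset hAS hBS
  have hKn : K.Nonempty := (ContinuousFunctionalCalculus.spectrum_nonempty (R := ℝ) A hA).mono Set.subset_union_left
  obtain ⟨p, hpK, hp⟩ := hKc.exists_isLeast hKn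
  obtain ⟨q, hqK, hq⟩ := hKc.exists_isGreatest hKn
  obtain ⟨δ, hδ, hbp⟩ := Metric.isOpen_iff.1 hS p (hKS hpK)
  obtain ⟨ε, hε, hbq⟩ := Metric.isOpen_iff.1 hS q (hKS hqK)
  set η := min δ ε / 2 with hη
  have hη0 : 0 < η := by positivity
  have hηδ : η < δ := by linarith [min_le_left δ ε, (lt_min hδ hε)]
  have hηε : η < ε := by linarith [min_le_right δ ε, (lt_min hδ hε)]
  have hp' : p - η ∈ S := hbp (by rw [Metric.mem_ball, Real.dist_eq, abs_lt]; constructor <;> linarith)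
  have hq' : q + η ∈ S := hbq (by rw [Metric.mem_ball, Real.dist_eq, abs_lt]; constructor <;> linarith)
  have hpq : p ≤ q := hp hqK
  set c := (p + q) / 2 with hc
  set ρ := (q - p) / 2 + η with hρd
  have hρ : 0 < ρ := by linarith
  have hsub : ∀ x, |x - c| < ρ → x ∈ S := by
    intro x hx
    rw [abs_lt] at hx
    exact hSo.out hp' hq' ⟨by linarith, by linarith⟩
  have hKb : ∀ x ∈ K, |x - c| < ρ := by
    intro x hx
    have h1 := hp hx
    have h2 := hq hx
    rw [abs_lt]
    constructor <;> linarith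
  obtain ⟨G, hG, hGF, hGf, hGc⟩ := lw_exists_G S f F hFcont hFan hFf c ρ hρ hsub
  refine lw_dir2 A B hA hB hAB c ρ hρ (fun x hx => hKb x (Or.inl hx)) (fun x hx => hKb x (Or.inr hx))
    f G hG hGf hGc ?_
  intro z hz1 hz
  rw [hGF z hz1 hz]
  apply hIm
  have hne : 1 + z ^ 2 ≠ 0 := by
    intro h
    have h1 : z ^ 2 = -1 := by linear_combination h
    have h2 := congrArg norm h1
    rw [norm_pow, norm_neg, norm_one] at h2
    nlinarith [norm_nonneg z]
  have this : 0 < (2 * z / (1 + z ^ 2)).im := by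
    rw [lw_psi_im]
    have h1 : 0 < 1 - ‖z‖ ^ 2 := by nlinarith [norm_nonneg z]
    have h2 := normSq_pos.2 hne
    positivity
  rw [add_im, ofReal_im, zero_add, im_ofReal_mul]
  exact mul_pos hρ this

end LwHelpers

open ContinuousLinearMap MeasureTheory

variable {H : Type*} [NormedAddCommGroup H] [InnerProductSpace ℂ H] [CompleteSpace H]

/-- L\"owner's theorem, operator form: a continuous real function on `(a, b)`
(`−∞ ≤ a < b ≤ ∞`) admitting a continuous extension `F` to the closed upper half-plane side
`{Im z > 0} ∪ (a, b)` that is analytic on `{Im z > 0}`, is operator monotone on `(a, b)` if and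
only if `Im F(z) ≥ 0` on the open upper half-plane. -/
theorem stmt12 [TopologicalSpace.SeparableSpace H] (hinf : ¬ FiniteDimensional ℂ H)
    (a b : EReal) (hab : a < b) (f : ℝ → ℝ) (F : ℂ → ℂ) (S : Set ℝ)
    (hS : S = {x : ℝ | a < (x : EReal) ∧ (x : EReal) < b})
    (hf : ContinuousOn f S)
    (hFcont : ContinuousOn F ({z : ℂ | 0 < z.im} ∪ ((fun x : ℝ => (x : ℂ)) '' S)))
    (hFan : DifferentiableOn ℂ F {z : ℂ | 0 < z.im})
    (hFf : ∀ x ∈ S, F (x : ℂ) = ((f x : ℝ) : ℂ)) :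
    (∀ A B : H →L[ℂ] H, IsSelfAdjoint A → IsSelfAdjoint B →
        spectrum ℂ A ⊆ (fun x : ℝ => (x : ℂ)) '' S →
        spectrum ℂ B ⊆ (fun x : ℝ => (x : ℂ)) '' S →
        (B - A).IsPositive → (cfc f B - cfc f A).IsPositive)
      ↔ (∀ z : ℂ, 0 < z.im → 0 ≤ (F z).im) := by
  have hSo : IsOpen S := by
    rw [hS]
    exact (isOpen_lt continuous_const continuous_coe_real_ereal).inter
      (isOpen_lt continuous_coe_real_ereal continuous_const)
  have hSc : S.OrdConnected := by
    rw [hS]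
    refine ⟨fun x hx y hy z hz => ⟨lt_of_lt_of_le hx.1 (EReal.coe_le_coe_iff.2 hz.1),
      lt_of_le_of_lt (EReal.coe_le_coe_iff.2 hz.2) hy.2⟩⟩
  have hSne : S.Nonempty := by
    obtain ⟨x, hx1, hx2⟩ := EReal.exists_between_coe_real hab
    exact ⟨x, by rw [hS]; exact ⟨hx1, hx2⟩⟩
  have hnt : Nontrivial H := by
    by_contra h
    rw [not_nontrivial_iff_subsingleton] at h
    exact hinf inferInstance
  constructor
  · intro hi w hw
    refine lw_fwd hinf f F S hSo hSne hFcont hFan hFf ?_ w hw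
    intro A B hA hB hAS hBS hAB
    exact (ContinuousLinearMap.le_def _ _).2 (hi A B hA hB ((lw_spec A hA S).2 hAS) ((lw_spec B hB S).2 hBS)
      ((ContinuousLinearMap.le_def _ _).1 hAB))
  · intro hIm A B hA hB hAS hBS hAB
    exact (ContinuousLinearMap.le_def _ _).1 (lw_bwd f F S hSo hSc hFcont hFan hFf hIm A B hA hB
      ((lw_spec A hA S).1 hAS) ((lw_spec B hB S).1 hBS) ((ContinuousLinearMap.le_def _ _).2 hAB))
end

section
/- Let c ∈ ℝ and let μ be a nonzero finite positive Borel measure on [−1, 1]. Let X = A + iB, where A and B are bounded self-adjoint operators on H and B is positive and invertible. Then for every λ ∈ [−1, 1] the operator I − λX is invertible; for λ ≠ 0, Im{X(I − λX)^{-1}} = B^{-1/2}(C_λ² + λ²I)^{-1}B^{-1/2} where C_λ := B^{-1/2}(I − λA)B^{-1/2}; and the operator Im{ cI + ∫_{[−1,1]} X(I − λX)^{-1} dμ(λ) } (Bochner integral) is positive and invertible. -/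
open ContinuousLinearMap MeasureTheory

variable {H : Type*} [NormedAddCommGroup H] [InnerProductSpace ℂ H] [CompleteSpace H]

/-- The inverse square root `T^{-1/2}` of a (positive invertible) operator, via the
continuous functional calculus. -/
noncomputable def invSqrt (T : H →L[ℂ] H) : H →L[ℂ] H := cfc (fun x : ℝ => (Real.sqrt x)⁻¹) T

lemma aux_N (B : H →L[ℂ] H) (hBpos : B.IsPositive) (hBU : IsUnit B) :
    IsSelfAdjoint (invSqrt B) ∧ Commute (invSqrt B) B ∧ invSqrt B * invSqrt B * B = 1 := by
  have hsa : IsSelfAdjoint B := hBpos.isSelfAdjoint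
  have hnn : (0 : H →L[ℂ] H) ≤ B := (ContinuousLinearMap.nonneg_iff_isPositive B).2 hBpos
  have hpos : ∀ x ∈ spectrum ℝ B, 0 < x := by
    intro x hx
    have h0 := spectrum_nonneg_of_nonneg hnn hx
    rcases h0.lt_or_eq with h | h
    · exact h
    · exact absurd (h ▸ hx) (spectrum.zero_notMem ℝ hBU)
  have hc : ContinuousOn (fun x : ℝ => (Real.sqrt x)⁻¹) (spectrum ℝ B) := by
    apply ContinuousOn.inv₀ (by fun_prop)
    intro x hx
    exact (Real.sqrt_pos.2 (hpos x hx)).ne'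
  refine ⟨cfc_predicate _ _, ?_, ?_⟩
  · have := cfc_commute_cfc (fun x : ℝ => (Real.sqrt x)⁻¹) id B
    rwa [cfc_id ℝ B] at this
  · have e : invSqrt B * invSqrt B * B = invSqrt B * invSqrt B * cfc (id : ℝ → ℝ) B := by
      rw [cfc_id ℝ B]
    rw [e]
    unfold invSqrt
    rw [← cfc_mul _ _ B hc hc, ← cfc_mul (fun x : ℝ => (Real.sqrt x)⁻¹ * (Real.sqrt x)⁻¹) id B
      (hc.mul hc) continuousOn_id]
    rw [← cfc_one ℝ B]
    apply cfc_congr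
    intro x hx
    have hx0 := hpos x hx
    have h1 := Real.sqrt_pos.2 hx0
    have h2 := Real.mul_self_sqrt hx0.le
    simp only [id, Pi.one_apply]
    rw [← mul_inv, h2, inv_mul_cancel₀ hx0.ne']

lemma aux_ring (B N : H →L[ℂ] H) (hc : Commute N B) (h : N * N * B = 1) :
    N * (B * N) = 1 ∧ (B * N) * N = 1 ∧ (B * N) * (B * N) = B := by
  have hc' : N * B = B * N := hc
  have h1 : N * (B * N) = 1 := by rw [← hc', ← mul_assoc, h]
  have h2 : (B * N) * N = 1 := by rw [← hc', mul_assoc, ← hc', ← mul_assoc, h]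
  refine ⟨h1, h2, ?_⟩
  rw [mul_assoc, h1, mul_one]

lemma aux_coer (B N : H →L[ℂ] H) (hN : IsSelfAdjoint N) (hB : IsSelfAdjoint B)
    (hc : Commute N B) (h : N * N * B = 1) :
    ∃ b : ℝ, 0 < b ∧ ∀ y, b * ‖y‖ ^ 2 ≤ (inner ℂ y (B y)).re := by
  obtain ⟨h1, -, h3⟩ := aux_ring B N hc h
  have hM : IsSelfAdjoint (B * N) := (IsSelfAdjoint.commute_iff hB hN).1 hc.symm
  set M := B * N
  refine ⟨((‖N‖ + 1) ^ 2)⁻¹, by positivity, fun y => ?_⟩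
  have e : (inner ℂ y (B y)).re = ‖M y‖ ^ 2 := by
    rw [← h3, ContinuousLinearMap.mul_apply, ← ContinuousLinearMap.adjoint_inner_left]
    rw [← ContinuousLinearMap.star_eq_adjoint, hM.star_eq]
    exact inner_self_eq_norm_sq (𝕜 := ℂ) (M y)
  have e2 : ‖y‖ ≤ (‖N‖ + 1) * ‖M y‖ := by
    have : y = N (M y) := by rw [← ContinuousLinearMap.mul_apply, h1]; rfl
    calc ‖y‖ = ‖N (M y)‖ := by rw [← this]
      _ ≤ ‖N‖ * ‖M y‖ := N.le_opNorm _
      _ ≤ _ := by gcongr; linarith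
  rw [e, inv_mul_le_iff₀ (by positivity), ← mul_pow]
  gcongr

lemma aux_C (C : H →L[ℂ] H) (hC : IsSelfAdjoint C) (s : ℝ) (hs : s ≠ 0) :
    IsUnit (C - ((s : ℂ) * Complex.I) • 1) := by
  have : (s : ℂ) * Complex.I ∉ spectrum ℂ C := by
    intro h
    have := hC.mem_spectrum_eq_re h
    have := congrArg Complex.im this
    simp at this
    exact hs this
  have := spectrum.notMem_iff.1 this
  rw [← IsUnit.neg_iff] at this
  simpa [Algebra.algebraMap_eq_smul_one] using this

lemma aux_im (Y : H →L[ℂ] H) (x : H) : (inner ℂ x (opIm Y x)).re = (inner ℂ x (Y x)).im := by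
  unfold opIm
  have h : inner ℂ x ((star Y) x) = (starRingEnd ℂ) (inner ℂ x (Y x)) := by
    rw [ContinuousLinearMap.star_eq_adjoint, ContinuousLinearMap.adjoint_inner_right,
      inner_conj_symm]
  rw [ContinuousLinearMap.smul_apply, inner_smul_right, ContinuousLinearMap.sub_apply,
    inner_sub_right, h, Complex.sub_conj]
  have : (2 * Complex.I)⁻¹ * (((2 * (inner ℂ x (Y x)).im : ℝ) : ℂ) * Complex.I) =
      ((inner ℂ x (Y x)).im : ℂ) := by
    push_cast
    field_simp
  rw [this, Complex.ofReal_re]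

lemma opIm_sa (Y : H →L[ℂ] H) : IsSelfAdjoint (opIm Y) := by
  unfold opIm
  rw [isSelfAdjoint_iff, star_smul, star_sub, star_star, ← neg_sub Y, smul_neg, ← neg_smul]
  congr 1
  simp

lemma aux_low (A B X : H →L[ℂ] H) (hA : IsSelfAdjoint A) (hX : X = A + Complex.I • B)
    (b : ℝ) (hb : 0 < b) (hB : ∀ y, b * ‖y‖ ^ 2 ≤ (inner ℂ y (B y)).re) (s : ℝ)
    (hs : s ∈ Set.Icc (-1 : ℝ) 1) (hU : IsUnit (1 - (s : ℂ) • X)) (x : H) :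
    b / (1 + ‖X‖) ^ 2 * ‖x‖ ^ 2 ≤
      (inner ℂ x ((X * Ring.inverse (1 - (s : ℂ) • X)) x)).im := by
  set R := 1 - (s : ℂ) • X with hR
  set y := Ring.inverse R x with hy
  have hx : x = R y := by
    rw [hy, ← ContinuousLinearMap.mul_apply, Ring.mul_inverse_cancel _ hU]; rfl
  have hx' : x = y - (s : ℂ) • X y := by rw [hx, hR]; simp
  have hs1 : |s| ≤ 1 := abs_le.2 hs
  have hn : ‖x‖ ≤ (1 + ‖X‖) * ‖y‖ := by
    calc ‖x‖ ≤ ‖y‖ + ‖(s : ℂ) • X y‖ := by rw [hx']; exact norm_sub_le _ _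
      _ ≤ ‖y‖ + 1 * (‖X‖ * ‖y‖) := by
        rw [norm_smul]
        gcongr
        · simpa using hs1
        · exact X.le_opNorm y
      _ = _ := by ring
  have hAi : (inner ℂ y (A y)).im = 0 := by
    have : inner ℂ y (A y) = (starRingEnd ℂ) (inner ℂ y (A y)) := by
      rw [inner_conj_symm]
      conv_lhs => rw [← hA.star_eq, ContinuousLinearMap.star_eq_adjoint,
        ContinuousLinearMap.adjoint_inner_right]
    exact Complex.conj_eq_iff_im.1 this.symm
  have key : (inner ℂ x ((X * Ring.inverse R) x)).im = (inner ℂ y (B y)).re := by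
    rw [ContinuousLinearMap.mul_apply, ← hy, hx', inner_sub_left, inner_smul_left]
    have h1 : (inner ℂ (X y) (X y) : ℂ) = ((‖X y‖ ^ 2 : ℝ) : ℂ) := by
      rw [inner_self_eq_norm_sq_to_K]; norm_cast
    have h2 : (inner ℂ y (X y)).im = (inner ℂ y (B y)).re := by
      rw [hX]
      simp [inner_add_right, inner_smul_right, hAi]
    rw [h1, Complex.conj_ofReal, ← Complex.ofReal_mul, Complex.sub_im, h2, Complex.ofReal_im,
      sub_zero]
  rw [key]
  refine le_trans ?_ (hB y)
  rw [div_mul_eq_mul_div, div_le_iff₀ (by positivity), mul_assoc, mul_comm (‖y‖ ^ 2), ← mul_pow]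
  gcongr

lemma aux_fac (A B X N : H →L[ℂ] H) (hX : X = A + Complex.I • B)
    (hc : Commute N B) (h : N * N * B = 1) (s : ℝ) :
    N * (1 - (s : ℂ) • X) * N = N * (1 - (s : ℂ) • A) * N - ((s : ℂ) * Complex.I) • 1 := by
  have h1 : N * B * N = 1 := by rw [mul_assoc]; exact (aux_ring B N hc h).1
  rw [hX, ← h1]
  simp only [mul_sub, sub_mul, smul_add, mul_add, add_mul, mul_smul_comm, smul_mul_assoc, smul_smul]
  abel

lemma aux_unit (A B X N : H →L[ℂ] H) (hA : IsSelfAdjoint A) (hN : IsSelfAdjoint N)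
    (hX : X = A + Complex.I • B)
    (hc : Commute N B) (h : N * N * B = 1) (s : ℝ) :
    IsUnit (1 - (s : ℂ) • X) := by
  by_cases hs : s = 0
  · simp [hs]
  have hNU : IsUnit N := ⟨⟨N, B * N, (aux_ring B N hc h).1, (aux_ring B N hc h).2.1⟩, rfl⟩
  have hC : IsSelfAdjoint (N * (1 - (s : ℂ) • A) * N) := by
    rw [isSelfAdjoint_iff]
    simp [hN.star_eq, hA.star_eq, mul_assoc]
  have := aux_C _ hC s hs
  rw [← aux_fac A B X N hX hc h, hNU.mul_right_iff, hNU.mul_left_iff] at this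
  exact this

lemma aux_formula (A B X N : H →L[ℂ] H) (hA : IsSelfAdjoint A) (hN : IsSelfAdjoint N)
    (hX : X = A + Complex.I • B)
    (hc : Commute N B) (h : N * N * B = 1) (s : ℝ) (hs : s ≠ 0) :
    opIm (X * Ring.inverse (1 - (s : ℂ) • X)) =
      N * Ring.inverse ((N * (1 - (s : ℂ) • A) * N) ^ 2 + (s ^ 2 : ℝ) • 1) * N := by
  have hU := aux_unit A B X N hA hN hX hc h s
  obtain ⟨h1, h2, -⟩ := aux_ring B N hc h
  have hC : IsSelfAdjoint (N * (1 - (s : ℂ) • A) * N) := by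
    rw [isSelfAdjoint_iff]
    simp [hN.star_eq, hA.star_eq, mul_assoc]
  have hf := aux_fac A B X N hX hc h s
  set R := 1 - (s : ℂ) • X with hR
  set C := N * (1 - (s : ℂ) • A) * N
  obtain ⟨P, hP⟩ := aux_C C hC s hs
  obtain ⟨Q, hQ⟩ := aux_C C hC (-s) (neg_ne_zero.2 hs)
  have hQ' : (Q : H →L[ℂ] H) = C + ((s : ℂ) * Complex.I) • 1 := by
    rw [hQ]; simp
  have hPQ : C ^ 2 + (s ^ 2 : ℝ) • (1 : H →L[ℂ] H) = ((P * Q : (H →L[ℂ] H)ˣ) : H →L[ℂ] H) := by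
    rw [Units.val_mul, hP, hQ']
    have : (s ^ 2 : ℝ) • (1 : H →L[ℂ] H) =
        -((((s : ℂ) * Complex.I) * ((s : ℂ) * Complex.I)) • 1) := by
      rw [← neg_smul, ← Complex.coe_smul]
      congr 1
      push_cast
      linear_combination (s : ℂ) ^ 2 * Complex.I_mul_I
    rw [this]
    simp only [sub_mul, mul_add, mul_smul_comm, smul_mul_assoc, smul_smul, smul_add, smul_sub,
      mul_one, one_mul, pow_two]
    abel
  rw [hPQ, Ring.inverse_unit]
  have hRinv : Ring.inverse R = N * (↑P⁻¹ : H →L[ℂ] H) * N := by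
    have hNU : IsUnit N := ⟨⟨N, B * N, h1, h2⟩, rfl⟩
    have e1 : N * (R * (N * (↑P⁻¹ : H →L[ℂ] H) * N)) = N * 1 := by
      calc N * (R * (N * (↑P⁻¹ : H →L[ℂ] H) * N)) = (N * R * N) * ↑P⁻¹ * N := by
            simp only [mul_assoc]
        _ = N * 1 := by rw [hf, ← hP]; simp
    have e2 := hNU.mul_left_cancel e1
    calc Ring.inverse R = Ring.inverse R * (R * (N * (↑P⁻¹ : H →L[ℂ] H) * N)) := by
          rw [e2, mul_one]
      _ = _ := by rw [← mul_assoc, Ring.inverse_mul_cancel _ hU, one_mul]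
  have hstar : star (↑P⁻¹ : H →L[ℂ] H) = ↑Q⁻¹ := by
    have : star P = Q := by
      ext1
      rw [Units.coe_star, hP, hQ']
      simp [hC.star_eq]
    rw [← Units.coe_star, star_inv, this]
  have hXR : X * Ring.inverse R = (s : ℂ)⁻¹ • (Ring.inverse R - 1) := by
    have : (s : ℂ) • X = 1 - R := by rw [hR]; abel
    have h3 : X = (s : ℂ)⁻¹ • (1 - R) := by
      rw [← this, smul_smul, inv_mul_cancel₀ (by exact_mod_cast hs), one_smul]
    rw [h3, smul_mul_assoc, sub_mul, one_mul, Ring.mul_inverse_cancel _ hU]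
  have hdiff : (↑P⁻¹ : H →L[ℂ] H) - ↑Q⁻¹ = (2 * (s : ℂ) * Complex.I) • ↑(P * Q)⁻¹ := by
    have e : (Q : H →L[ℂ] H) - P = (2 * (s : ℂ) * Complex.I) • 1 := by
      rw [hP, hQ', show 2 * (s : ℂ) * Complex.I = s * Complex.I + s * Complex.I by ring, add_smul]
      abel
    have : (↑P⁻¹ : H →L[ℂ] H) - ↑Q⁻¹ = ↑Q⁻¹ * ((Q : H →L[ℂ] H) - P) * ↑P⁻¹ := by
      simp [mul_sub, sub_mul]
    rw [this, e, mul_inv_rev]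
    simp
  unfold opIm
  rw [hXR, hRinv]
  have : star ((s : ℂ)⁻¹ • (N * (↑P⁻¹ : H →L[ℂ] H) * N - 1)) =
      (s : ℂ)⁻¹ • (N * (↑Q⁻¹ : H →L[ℂ] H) * N - 1) := by
    rw [star_smul, star_sub, star_mul, star_mul, hstar, hN.star_eq]
    simp [mul_assoc]
  rw [this, ← smul_sub, sub_sub_sub_cancel_right, ← sub_mul, ← mul_sub, hdiff]
  simp only [mul_smul_comm, smul_mul_assoc, smul_smul]
  have hs' : (s : ℂ) ≠ 0 := by exact_mod_cast hs
  have : (2 * Complex.I)⁻¹ * ((s : ℂ)⁻¹ * (2 * (s : ℂ) * Complex.I)) = 1 := by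
    field_simp
  rw [← mul_assoc] at this
  first | rw [this, one_smul] | (rw [mul_assoc] at this; rw [this, one_smul])

lemma aux_int (X : H →L[ℂ] H) (μ : Measure ℝ) [IsFiniteMeasure μ]
    (hμs : μ (Set.Icc (-1 : ℝ) 1)ᶜ = 0) (hU : ∀ s : ℝ, IsUnit (1 - (s : ℂ) • X)) :
    Integrable (fun s : ℝ => X * Ring.inverse (1 - (s : ℂ) • X)) μ := by
  have hc : Continuous (fun s : ℝ => X * Ring.inverse (1 - (s : ℂ) • X)) := by
    refine continuous_const.mul ?_
    rw [continuous_iff_continuousAt]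
    intro s
    obtain ⟨u, hu⟩ := hU s
    have h1 : ContinuousAt (Ring.inverse : (H →L[ℂ] H) → _) (1 - (s : ℂ) • X) := by
      rw [← hu]; exact NormedRing.inverse_continuousAt u
    have h2 : ContinuousAt (fun s : ℝ => (1 : H →L[ℂ] H) - (s : ℂ) • X) s := by fun_prop
    exact ContinuousAt.comp (f := fun s : ℝ => (1 : H →L[ℂ] H) - (s : ℂ) • X) h1 h2
  have hr : μ.restrict (Set.Icc (-1 : ℝ) 1) = μ := Measure.restrict_eq_self_of_ae_mem hμs
  rw [← hr]
  exact hc.continuousOn.integrableOn_compact isCompact_Icc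

theorem stmt13 [TopologicalSpace.SeparableSpace H] (hinf : ¬ FiniteDimensional ℂ H)
    (c : ℝ) (μ : Measure ℝ) [IsFiniteMeasure μ] (hμ0 : μ ≠ 0)
    (hμs : μ (Set.Icc (-1 : ℝ) 1)ᶜ = 0)
    (A B X : H →L[ℂ] H) (hA : IsSelfAdjoint A) (hB : IsSelfAdjoint B)
    (hBpos : B.IsPositive) (hBU : IsUnit B) (hX : X = A + Complex.I • B) :
    (∀ s ∈ Set.Icc (-1 : ℝ) 1, IsUnit (1 - (s : ℂ) • X)) ∧
    (∀ s ∈ Set.Icc (-1 : ℝ) 1, s ≠ 0 →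
      opIm (X * Ring.inverse (1 - (s : ℂ) • X)) =
        invSqrt B *
          Ring.inverse
            ((invSqrt B * (1 - (s : ℂ) • A) * invSqrt B) ^ 2 + (s ^ 2 : ℝ) • 1) *
          invSqrt B) ∧
    Integrable (fun s : ℝ => X * Ring.inverse (1 - (s : ℂ) • X)) μ ∧
    (opIm ((c : ℂ) • 1 + ∫ s, X * Ring.inverse (1 - (s : ℂ) • X) ∂μ)).IsPositive ∧
    IsUnit (opIm ((c : ℂ) • 1 + ∫ s, X * Ring.inverse (1 - (s : ℂ) • X) ∂μ)) := by
  obtain ⟨hN, hc, h⟩ := aux_N B hBpos hBU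
  have hU := aux_unit A B X _ hA hN hX hc h
  have hI := aux_int X μ hμs hU
  refine ⟨fun s _ => hU s, fun s _ hs => aux_formula A B X _ hA hN hX hc h s hs, hI, ?_⟩
  obtain ⟨b, hb, hBb⟩ := aux_coer B _ hN hB hc h
  set T := opIm ((c : ℂ) • 1 + ∫ s, X * Ring.inverse (1 - (s : ℂ) • X) ∂μ) with hT
  set δ := b / (1 + ‖X‖) ^ 2 * μ.real Set.univ with hδ
  have hm : 0 < μ.real Set.univ := by
    rw [measureReal_def]
    exact ENNReal.toReal_pos (by simpa using hμ0) (measure_ne_top _ _)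
  have hδ0 : 0 < δ := by positivity
  have hlow : ∀ x, δ * ‖x‖ ^ 2 ≤ (inner ℂ x (T x)).re := by
    intro x
    rw [hT, aux_im]
    let L : (H →L[ℂ] H) →L[ℝ] ℝ := Complex.imCLM.comp
      (((innerSL ℂ x).comp (ContinuousLinearMap.apply ℂ H x)).restrictScalars ℝ)
    have hL : ∀ Y, L Y = (inner ℂ x (Y x)).im := fun Y => rfl
    rw [← hL, map_add, ← L.integral_comp_comm hI]
    have h0 : L ((c : ℂ) • 1) = 0 := by
      rw [hL, ContinuousLinearMap.smul_apply, inner_smul_right, Complex.im_ofReal_mul]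
      rw [ContinuousLinearMap.one_apply, inner_self_eq_norm_sq_to_K]
      have : (((‖x‖ : ℂ)) ^ 2).im = 0 := by
        rw [← Complex.ofReal_pow, Complex.ofReal_im]
      exact mul_eq_zero_of_right _ this
    rw [h0, zero_add]
    have : δ * ‖x‖ ^ 2 = ∫ _, b / (1 + ‖X‖) ^ 2 * ‖x‖ ^ 2 ∂μ := by
      rw [integral_const, smul_eq_mul, hδ]; ring
    rw [this]
    refine integral_mono_ae (integrable_const _) (L.integrable_comp hI) ?_
    have hae : ∀ᵐ s ∂μ, s ∈ Set.Icc (-1 : ℝ) 1 := hμs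
    filter_upwards [hae] with s hs
    exact aux_low A B X hA hX b hb hBb s hs (hU s) x
  have hsa : IsSelfAdjoint T := opIm_sa _
  constructor
  · refine ⟨(ContinuousLinearMap.isSelfAdjoint_iff_isSymmetric).1 hsa, fun x => ?_⟩
    rw [ContinuousLinearMap.reApplyInnerSelf_apply, inner_re_symm]
    exact le_trans (by positivity) (hlow x)
  · refine ContinuousLinearMap.isUnit_of_forall_le_norm_inner_map T (c := ⟨δ, hδ0.le⟩) hδ0
      fun x => ?_
    rw [norm_inner_symm, mul_comm]
    exact (hlow x).trans (Complex.re_le_norm _)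
end
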